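/- For every continuous bounded function f : Ω_0 × U_d → ℝ and P_0-almost every ω ∈ Ω_0, liminf_{n→∞} (1/n) log E^{π,ω}_0[ exp( Σ_{k=0}^{n−1} f(τ_{X_k}ω, X_{k+1}−X_k) ) ] ≥ sup_{μ ∈ M_1*} { ⟨f,μ⟩ − I(μ) } = sup_{μ ∈ M_1(Ω_0 × U_d)} { ⟨f,μ⟩ − I(μ) }. -/

import Mathlib

open MeasureTheory ProbabilityTheory Filter Topology
open scoped ENNReal NNReal BigOperators

noncomputable section

namespace SRWPC

/-- Vertices of the lattice `ℤ^d`. -/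
abbrev V (d : ℕ) := Fin d → ℤ

/-- Index of a nearest-neighbour bond: the bond from `x` to `x + eᵢ`. -/
abbrev EdgeIx (d : ℕ) := V d × Fin d

/-- Percolation configurations `Ω = {0,1}^{𝔹_d}`. -/
abbrev Config (d : ℕ) := EdgeIx d → Bool

/-- The `i`-th coordinate unit vector. -/
def unitVec (d : ℕ) (i : Fin d) : V d := fun j => if j = i then 1 else 0

/-- The set `𝕌_d` of the `2d` unit vectors. -/
def Ud (d : ℕ) : Finset (V d) :=
  (Finset.univ.image (unitVec d)) ∪ (Finset.univ.image (fun i => -unitVec d i))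

/-- The type of nearest-neighbour steps (elements of `𝕌_d`). -/
abbrev Step (d : ℕ) := {e : V d // e ∈ Ud d}

/-- The shift `(τ_x ω)_b = ω_{x+b}`. -/
def shift {d : ℕ} (x : V d) (ω : Config d) : Config d := fun b => ω (b.1 + x, b.2)

/-- The bond from `x` to `x + e` is open in `ω`. -/
def edgeOpen {d : ℕ} (ω : Config d) (x e : V d) : Prop :=
  ∃ i : Fin d, (e = unitVec d i ∧ ω (x, i) = true) ∨
    (e = -unitVec d i ∧ ω (x - unitVec d i, i) = true)

open Classical in
/-- The number of open bonds incident to `x`. -/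
def openDeg {d : ℕ} (ω : Config d) (x : V d) : ℕ :=
  ((Ud d).filter (fun e => edgeOpen ω x e)).card

open Classical in
/-- The transition probability `π_ω(x,e)` of the simple random walk on the cluster. -/
def trans {d : ℕ} (ω : Config d) (x e : V d) : ℝ :=
  if edgeOpen ω x e then 1 / openDeg ω x else 0

/-- `γ` restricted to `{0,…,n}` is a nearest-neighbour open path in `ω`. -/
def IsOpenPath {d : ℕ} (ω : Config d) (γ : ℕ → V d) (n : ℕ) : Prop :=
  ∀ k < n, (γ (k + 1) - γ k) ∈ Ud d ∧ edgeOpen ω (γ k) (γ (k + 1) - γ k)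

/-- `x` lies in the box `[-r,r]^d`. -/
def inBox {d : ℕ} (x : V d) (r : ℝ) : Prop := ∀ i, |(x i : ℝ)| ≤ r

/-- `x` is joined to infinity by a nearest-neighbour open path, i.e. `x ∈ 𝒞_∞(ω)`. -/
def memCluster {d : ℕ} (ω : Config d) (x : V d) : Prop :=
  ∀ R : ℕ, ∃ (γ : ℕ → V d) (n : ℕ), γ 0 = x ∧ IsOpenPath ω γ n ∧ ¬ inBox (γ n) R

/-- The event `Ω_0 = {0 ∈ 𝒞_∞}`. -/
def cluZero (d : ℕ) : Set (Config d) := {ω | memCluster ω 0}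

/-- `P` is the Bernoulli bond percolation product measure with parameter `q`. -/
def IsBernoulli (d : ℕ) (q : ℝ) (P : Measure (Config d)) : Prop :=
  IsProbabilityMeasure P ∧
    ∀ (F : Finset (EdgeIx d)) (a : EdgeIx d → Bool),
      P {ω | ∀ b ∈ F, ω b = a b} = ∏ b ∈ F, ENNReal.ofReal (if a b then q else 1 - q)

/-- The critical probability `p_c(d)` of bond percolation on `ℤ^d`. -/
def pc (d : ℕ) : ℝ :=
  sInf {q : ℝ | q ∈ Set.Icc (0 : ℝ) 1 ∧
    ∀ P : Measure (Config d), IsBernoulli d q P → 0 < P (cluZero d)}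

variable {d : ℕ}

/-- Position of the walk after `k` steps, given the sequence of steps `s`. -/
def pos {n : ℕ} (s : Fin n → Step d) (k : ℕ) : V d :=
  ∑ j ∈ Finset.univ.filter (fun j : Fin n => (j : ℕ) < k), (s j).1

/-- The environment/step pair `(τ_{X_k} ω, X_{k+1} - X_k)` seen at time `k`. -/
def envPair (ω : Config d) {n : ℕ} (s : Fin n → Step d) (k : Fin n) : Config d × Step d :=
  (shift (pos s k) ω, s k)

/-- Quenched probability of a given sequence of `n` steps under the Markov kernel `κ`. -/
def pathProb (κ : Config d → Step d → ℝ) (ω : Config d) {n : ℕ} (s : Fin n → Step d) : ℝ :=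
  ∏ k : Fin n, κ (shift (pos s k) ω) (s k)

/-- The SRWPC transition kernel `π`. -/
def srw (d : ℕ) : Config d → Step d → ℝ := fun ω e => trans ω 0 e.1

/-- Quenched expectation (under `P_0^{κ,ω}`) of a functional of the first `n` steps. -/
def qE (κ : Config d → Step d → ℝ) (ω : Config d) {n : ℕ} (F : (Fin n → Step d) → ℝ) : ℝ :=
  ∑ s : Fin n → Step d, pathProb κ ω s * F s

/-- Quenched probability (under `P_0^{κ,ω}`) of a set of `n`-step trajectories. -/
def qP (κ : Config d → Step d → ℝ) (ω : Config d) {n : ℕ} (A : Set (Fin n → Step d)) : ℝ :=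
  ∑ s : Fin n → Step d, A.indicator (fun s' => pathProb κ ω s') s

/-- Quenched probability, `ℝ≥0∞`-valued. -/
def qPE (κ : Config d → Step d → ℝ) (ω : Config d) {n : ℕ} (A : Set (Fin n → Step d)) : ℝ≥0∞ :=
  ENNReal.ofReal (qP κ ω A)

/-- The environment-step space `Ω_0 × 𝕌_d`. -/
abbrev EnvSp (d : ℕ) := Config d × Step d

/-- The pair empirical measure `ℒ_n` as a measure. -/
def empMeas (ω : Config d) {n : ℕ} (s : Fin n → Step d) : Measure (EnvSp d) :=
  (n : ℝ≥0∞)⁻¹ • ∑ k : Fin n, Measure.dirac (envPair ω s k)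

lemma empMeas_isProb (ω : Config d) {n : ℕ} (hn : n ≠ 0) (s : Fin n → Step d) :
    IsProbabilityMeasure (empMeas ω s) := by
  constructor
  simp only [empMeas, Measure.smul_apply, Measure.coe_finset_sum, Finset.sum_apply,
    Measure.dirac_apply_of_mem (Set.mem_univ _), smul_eq_mul]
  rw [Finset.sum_const, Finset.card_univ, Fintype.card_fin, nsmul_eq_mul, mul_one,
    ENNReal.inv_mul_cancel]
  · exact_mod_cast hn
  · exact ENNReal.natCast_ne_top n

/-- The pair empirical measure `ℒ_{n+1}` as a probability measure. -/
def empPM (ω : Config d) {n : ℕ} (s : Fin (n + 1) → Step d) : ProbabilityMeasure (EnvSp d) :=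
  ⟨empMeas ω s, empMeas_isProb ω (Nat.succ_ne_zero n) s⟩

/-- First marginal `(μ)_1` of a measure on `Ω_0 × 𝕌_d`. -/
def marg1 (μ : Measure (EnvSp d)) : Measure (Config d) := μ.map Prod.fst

/-- Second marginal `(μ)_2` of a measure on `Ω_0 × 𝕌_d`. -/
def marg2 (μ : Measure (EnvSp d)) : Measure (Config d) := μ.map (fun q => shift q.2.1 q.1)

/-- The slice `dμ(·, e)` of a measure on `Ω_0 × 𝕌_d` at a fixed step `e`. -/
def slice (μ : Measure (EnvSp d)) (e : Step d) : Measure (Config d) :=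
  (μ.restrict (Set.univ ×ˢ {e})).map Prod.fst

/-- The space `ℳ_1⋆`: probability measures on `Ω_0 × 𝕌_d` whose two marginals coincide and
are absolutely continuous w.r.t. `P₀`, and whose densities `dμ(ω,e)/d(μ)_1(ω)` are positive
precisely on open edges, `P₀`-a.s. -/
def M1star (d : ℕ) (P₀ : Measure (Config d)) : Set (ProbabilityMeasure (EnvSp d)) :=
  {μ | marg1 μ.toMeasure = marg2 μ.toMeasure ∧ marg1 μ.toMeasure ≪ P₀ ∧
    ∃ ρ : Step d → Config d → ℝ≥0∞, (∀ e, Measurable (ρ e)) ∧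
      (∀ e, slice μ.toMeasure e = (marg1 μ.toMeasure).withDensity (ρ e)) ∧
      (∀ e : Step d, ∀ᵐ ω ∂P₀, (0 < ρ e ω ↔ edgeOpen ω 0 e.1))}

/-- The reference measure `π_ω(0,e) d(μ)_1(ω)` on `Ω_0 × 𝕌_d`. -/
def refM (μ : Measure (EnvSp d)) : Measure (EnvSp d) :=
  Measure.sum (fun e : Step d =>
    ((marg1 μ).withDensity (fun ω => ENNReal.ofReal (trans ω 0 e.1))).map (fun ω => (ω, e)))

/-- `x log x - x + 1`. -/
def klFun (x : ℝ) : ℝ := x * Real.log x - x + 1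

open Classical in
/-- The entropy functional `ℑ` (a relative entropy with respect to `refM μ`;
it equals `∫ Σ_e dμ(ω,e) log[dμ(ω,e) / (d(μ)_1(ω) π_ω(0,e))]` on `ℳ_1⋆` and `∞` otherwise). -/
def entI (P₀ : Measure (Config d)) (μ : ProbabilityMeasure (EnvSp d)) : ℝ≥0∞ :=
  if μ ∈ M1star d P₀ ∧ μ.toMeasure ≪ refM μ.toMeasure then
    ∫⁻ q, ENNReal.ofReal (klFun ((μ.toMeasure.rnDeriv (refM μ.toMeasure)) q).toReal)
      ∂(refM μ.toMeasure)
  else ∞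

/-- The pairing `⟨f, μ⟩`. -/
def pairing (f : EnvSp d → ℝ) (μ : ProbabilityMeasure (EnvSp d)) : ℝ :=
  ∫ q, f q ∂μ.toMeasure

/-- The Fenchel–Legendre transform `ℑ⋆` of `ℑ`. -/
def entIstar (P₀ : Measure (Config d)) (f : BoundedContinuousFunction (EnvSp d) ℝ) : EReal :=
  ⨆ μ : ProbabilityMeasure (EnvSp d),
    ((pairing f μ : ℝ) : EReal) - ((entI P₀ μ : ℝ≥0∞) : EReal)

/-- The double Fenchel–Legendre transform `ℑ⋆⋆` of `ℑ`. -/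
def entIbis (P₀ : Measure (Config d)) (μ : ProbabilityMeasure (EnvSp d)) : EReal :=
  ⨆ f : BoundedContinuousFunction (EnvSp d) ℝ,
    ((pairing f μ : ℝ) : EReal) - entIstar P₀ f

/-- The contraction map `ξ(μ) = ∫ Σ_e e dμ(ω,e)`. -/
def xi (μ : ProbabilityMeasure (EnvSp d)) : Fin d → ℝ :=
  fun i => ∫ q, ((q.2.1 i : ℤ) : ℝ) ∂μ.toMeasure

/-- The mean velocity `X_n / n` of a trajectory. -/
def meanVel {n : ℕ} (s : Fin n → Step d) : Fin d → ℝ :=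
  fun i => (n : ℝ)⁻¹ * ((pos s n) i : ℝ)

/-- The class `Π̃` of environment transition kernels. -/
def PiT (d : ℕ) (P₀ : Measure (Config d)) : Set (Config d → Step d → ℝ) :=
  {κ | (∀ e : Step d, Measurable (fun ω => κ ω e)) ∧
    (∀ ω e, 0 ≤ κ ω e) ∧ (∀ e : Step d, ∀ᵐ ω ∂P₀, κ ω e ≤ 1) ∧
    (∀ᵐ ω ∂P₀, ∑ e : Step d, κ ω e = 1) ∧
    (∀ e : Step d, ∀ᵐ ω ∂P₀, (κ ω e = 0 ↔ trans ω 0 e.1 = 0))}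

/-- `φ dP₀` is an invariant probability density for the kernel `κ`. -/
def IsInvDensity (P₀ : Measure (Config d)) (κ : Config d → Step d → ℝ)
    (φ : Config d → ℝ) : Prop :=
  Measurable φ ∧ (∀ ω, 0 ≤ φ ω) ∧ (∫ ω, φ ω ∂P₀) = 1 ∧
    (∀ᵐ ω ∂P₀, φ ω = ∑ e : Step d, κ (shift (-e.1) ω) e * φ (shift (-e.1) ω))

/-- The set `ℰ` of pairs `(π̃, φ)`. -/
def Epairs (d : ℕ) (P₀ : Measure (Config d)) :
    Set ((Config d → Step d → ℝ) × (Config d → ℝ)) :=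
  {q | q.1 ∈ PiT d P₀ ∧ IsInvDensity P₀ q.1 q.2}

/-- The measure `dμ(ω,e) = π̃(ω,e) φ(ω) dP₀(ω)` associated with a pair `(π̃, φ)`. -/
def pairMeasure (P₀ : Measure (Config d)) (κ : Config d → Step d → ℝ)
    (φ : Config d → ℝ) : Measure (EnvSp d) :=
  Measure.sum (fun e : Step d =>
    (P₀.withDensity (fun ω => ENNReal.ofReal (κ ω e * φ ω))).map (fun ω => (ω, e)))

/-- The kernel `dμ/d(μ)_1` associated with a measure on `Ω_0 × 𝕌_d`. -/
def toKappa (μ : Measure (EnvSp d)) : Config d → Step d → ℝ :=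
  fun ω e => ((slice μ e).rnDeriv (marg1 μ) ω).toReal

/-- The density `d(μ)_1/dP₀` associated with a measure on `Ω_0 × 𝕌_d`. -/
def toPhi (P₀ : Measure (Config d)) (μ : Measure (EnvSp d)) : Config d → ℝ :=
  fun ω => ((marg1 μ).rnDeriv P₀ ω).toReal

/-- The environment Markov transition operator `R_κ`. -/
def kernelStep (κ : Config d → Step d → ℝ) (f : Config d → ℝ) : Config d → ℝ :=
  fun ω => ∑ e : Step d, κ ω e * f (shift e.1 ω)

/-- `Q` is an invariant measure for the environment kernel `R_κ`. -/
def IsInvariant (κ : Config d → Step d → ℝ) (Q : Measure (Config d)) : Prop :=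
  ∀ f : Config d → ℝ, Measurable f → (∃ C, ∀ ω, |f ω| ≤ C) →
    ∫ ω, kernelStep κ f ω ∂Q = ∫ ω, f ω ∂Q

/-- Partial sum `Σ_{k<m} f(τ_{X_k}ω, X_{k+1}-X_k)` along a trajectory of length `N`. -/
def partialSumF (f : EnvSp d → ℝ) (ω : Config d) {N : ℕ} (s : Fin N → Step d) (m : ℕ) : ℝ :=
  ∑ k ∈ Finset.univ.filter (fun k : Fin N => (k : ℕ) < m), f (envPair ω s k)

/-- The sum of `G` along the path `γ` up to time `n`. -/
def pathSum (G : Config d → V d → ℝ) (ω : Config d) (γ : ℕ → V d) (n : ℕ) : ℝ :=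
  ∑ k ∈ Finset.range n, G (shift (γ k) ω) (γ (k + 1) - γ k)

/-- The class `𝒢_∞` of gradients: zero mean, uniformly bounded, closed loops. -/
def Ginfty (d : ℕ) (P₀ : Measure (Config d)) : Set (Config d → V d → ℝ) :=
  {G | (∀ e ∈ Ud d, Measurable (fun ω => G ω e)) ∧
    (∀ e ∈ Ud d, ∫ ω, G ω e ∂P₀ = 0) ∧
    (∃ M : ℝ, ∀ e ∈ Ud d, ∀ᵐ ω ∂P₀, |G ω e| ≤ M) ∧
    (∀ᵐ ω ∂P₀, ∀ (γ : ℕ → V d) (n : ℕ),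
      memCluster ω (γ 0) → IsOpenPath ω γ n → γ n = γ 0 → pathSum G ω γ n = 0)}

open Classical in
/-- The corrector `Ψ(ω,x)`: the sum of `G` along some open path from `0` to `x`. -/
def corr (G : Config d → V d → ℝ) (ω : Config d) (x : V d) : ℝ :=
  if h : ∃ q : (ℕ → V d) × ℕ, q.1 0 = 0 ∧ q.1 q.2 = x ∧ IsOpenPath ω q.1 q.2
  then pathSum G ω h.choose.1 h.choose.2 else 0

/-- The chemical distance: minimal length of an open path joining `x` and `y`. -/
def chemDist (ω : Config d) (x y : V d) : ℕ :=
  sInf {n : ℕ | ∃ γ : ℕ → V d, γ 0 = x ∧ γ n = y ∧ IsOpenPath ω γ n}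

open Classical in
/-- The functional `Λ(f,G)`. -/
def Lam (P₀ : Measure (Config d)) (f : EnvSp d → ℝ) (G : Config d → V d → ℝ) : EReal :=
  essSup (fun ω => ((Real.log (∑ e : Step d,
    if edgeOpen ω 0 e.1 then trans ω 0 e.1 * Real.exp (f (ω, e) + G ω e.1) else 0)) : EReal)) P₀

/-- The variational formula `H̄(f) = sup_{μ ∈ ℳ_1⋆} {⟨f,μ⟩ - ℑ(μ)}`. -/
def Hbar (P₀ : Measure (Config d)) (f : EnvSp d → ℝ) : EReal :=
  ⨆ μ ∈ M1star d P₀, ((pairing f μ : ℝ) : EReal) - ((entI P₀ μ : ℝ≥0∞) : EReal)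

/-- The finite σ-algebra `𝓑_k` recording all bonds in the box of size `k` around the origin. -/
def Bsig (d k : ℕ) : MeasurableSpace (Config d) :=
  MeasurableSpace.comap
    (fun (ω : Config d) (b : {b : EdgeIx d // ∀ i, |b.1 i| ≤ (k : ℤ)}) => ω b.1) inferInstance

end SRWPC

/-!
The infinite cluster is unique (Burton–Keane): opening the bonds of a box that meets three infinite
clusters would create a trifurcation, and disjoint trifurcations in a large box are outnumbered by
its boundary. Together with mixing, an event which is invariant under open steps of the walk has
`P₀`-probability `0` or `1`. The event that the logarithmic moment generating functions `u_n`
satisfy `u_n ≥ c n - K` for some `K` and all `n` is of this kind, so it is enough to give it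
positive probability when `c < ⟨f,μ⟩ - ℑ(μ)` for some `μ ∈ ℳ_1⋆`.

The kernel `κ = dμ/d(μ)_1` preserves `(μ)_1`, and Gibbs' variational inequality gives
`u_{n+1}(ω) ≥ g(ω) + Σ_e κ(ω,e) u_n(τ_e ω)` with `∫ g d(μ)_1 = ⟨f,μ⟩ - ℑ(μ)`. If `(μ)_1`-almost
surely `u_n < c n` for some `n`, then Hopf's maximal inequality for `κ`, applied to `c n - u_n`,
yields `∫ g d(μ)_1 ≤ c`.
-/

namespace SRWPC

/-! ### Mixing and the zero-one law -/

section Mixing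

variable {X ι : Type*} {S : Set (Set X)} {T : ι → X → X} {l : Filter ι}

lemma tendsto_measureReal_preimage_inter_of_isPiSystem {m : MeasurableSpace X} {μ : Measure X}
    [IsProbabilityMeasure μ] (hgen : m = MeasurableSpace.generateFrom S) (hS : IsPiSystem S)
    (hT : ∀ i, MeasurePreserving (T i) μ μ) {C : Set X} (hC : MeasurableSet C)
    (hmix : ∀ B ∈ S, Tendsto (fun i => μ.real (T i ⁻¹' B ∩ C)) l (𝓝 (μ.real B * μ.real C)))
    {B : Set X} (hB : MeasurableSet B) :
    Tendsto (fun i => μ.real (T i ⁻¹' B ∩ C)) l (𝓝 (μ.real B * μ.real C)) := by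
  induction B, hB using MeasurableSpace.induction_on_inter hgen hS with
  | empty => simpa using tendsto_const_nhds
  | basic t ht => exact hmix t ht
  | compl t ht ih =>
    have hcompl (i : ι) : μ.real (T i ⁻¹' tᶜ ∩ C) = μ.real C - μ.real (T i ⁻¹' t ∩ C) := by
      rw [eq_sub_iff_add_eq', Set.preimage_compl, Set.inter_comm, Set.inter_comm _ C,
        ← Set.sdiff_eq]
      exact measureReal_inter_add_sdiff ((hT i).measurable ht)
    simp_rw [hcompl]
    rw [probReal_compl_eq_one_sub ht, sub_mul, one_mul]
    exact tendsto_const_nhds.sub ih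
  | iUnion f hd hm ih =>
    have htsum (A : ℕ → Set X) (hA : Pairwise (Function.onFun Disjoint A))
        (hAm : ∀ k, MeasurableSet (A k)) : μ.real (⋃ k, A k) = ∑' k, μ.real (A k) := by
      rw [Measure.real, measure_iUnion hA hAm, ENNReal.tsum_toReal_eq fun _ => measure_ne_top _ _]
      rfl
    have hsummable : Summable fun k => μ.real (f k) := by
      refine ENNReal.summable_toReal ?_
      rw [← measure_iUnion hd hm]
      exact measure_ne_top _ _
    have hunion (i : ι) :
        μ.real (T i ⁻¹' (⋃ k, f k) ∩ C) = ∑' k, μ.real (T i ⁻¹' f k ∩ C) := by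
      rw [Set.preimage_iUnion, Set.iUnion_inter]
      exact htsum _
        (fun j k hjk => ((hd hjk).preimage _).mono Set.inter_subset_left Set.inter_subset_left)
        fun k => ((hT i).measurable (hm k)).inter hC
    simp_rw [hunion]
    rw [htsum f hd hm, ← tsum_mul_right]
    refine tendsto_tsum_of_dominated_convergence hsummable ih (.of_forall fun i k => ?_)
    rw [Real.norm_of_nonneg measureReal_nonneg]
    calc μ.real (T i ⁻¹' f k ∩ C) ≤ μ.real (T i ⁻¹' f k) := measureReal_mono Set.inter_subset_left
      _ = μ.real (f k) := (hT i).measureReal_preimage (hm k).nullMeasurableSet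

lemma measure_eq_zero_or_one_of_mixing {m : MeasurableSpace X} {μ : Measure X}
    [IsProbabilityMeasure μ] [l.NeBot] (hgen : m = MeasurableSpace.generateFrom S)
    (hS : IsPiSystem S) (hT : ∀ i, MeasurePreserving (T i) μ μ)
    (hmix : ∀ B ∈ S, ∀ C ∈ S,
      Tendsto (fun i => μ.real (T i ⁻¹' B ∩ C)) l (𝓝 (μ.real B * μ.real C)))
    {A : Set X} (hA : MeasurableSet A) (hinv : ∀ i, T i ⁻¹' A = A) : μ A = 0 ∨ μ A = 1 := by
  have hSm : ∀ C ∈ S, MeasurableSet C := fun C hC => by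
    rw [hgen]; exact MeasurableSpace.measurableSet_generateFrom hC
  have hindep : IndepSets {A} S μ := by
    rw [IndepSets_iff]
    rintro _ C rfl hC
    have hlim := tendsto_measureReal_preimage_inter_of_isPiSystem hgen hS hT (hSm C hC)
      (fun B hB => hmix B hB C hC) hA
    simp_rw [hinv] at hlim
    have heq := tendsto_nhds_unique tendsto_const_nhds hlim
    simp only [Measure.real, ← ENNReal.toReal_mul] at heq
    exact (ENNReal.toReal_eq_toReal_iff' (by finiteness) (by finiteness)).1 heq
  have hindepm : Indep (MeasurableSpace.generateFrom {A}) m μ := by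
    have := hindep.indep' (by simpa using hA) hSm (IsPiSystem.singleton A) hS
    rwa [← hgen] at this
  exact measure_eq_zero_or_one_of_indepSet_self (hindepm.indepSet_of_measurableSet
    (MeasurableSpace.measurableSet_generateFrom rfl) hA)

end Mixing

section Cylinder

variable {ι : Type*}

/-- The cylinder of configurations agreeing with `a` on the finite set `F`. -/
def cyl (F : Finset ι) (a : ι → Bool) : Set (ι → Bool) := {ω | ∀ b ∈ F, ω b = a b}

@[simp] lemma mem_cyl {F : Finset ι} {a ω : ι → Bool} : ω ∈ cyl F a ↔ ∀ b ∈ F, ω b = a b := Iff.rfl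

lemma cyl_inter_cyl_of_mem [DecidableEq ι] {F G : Finset ι} {a c ω : ι → Bool} (ha : ω ∈ cyl F a)
    (hc : ω ∈ cyl G c) : cyl F a ∩ cyl G c = cyl (F ∪ G) ω := by
  ext η
  simp only [Set.mem_inter_iff, mem_cyl, Finset.forall_mem_union] at ha hc ⊢
  exact and_congr (forall₂_congr fun b hb => by rw [ha b hb])
    (forall₂_congr fun b hb => by rw [hc b hb])

lemma measurableSet_cyl (F : Finset ι) (a : ι → Bool) : MeasurableSet (cyl F a) := by
  have : cyl F a = ⋂ b ∈ F, (fun ω : ι → Bool => ω b) ⁻¹' {a b} := by ext ω; simp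
  rw [this]
  exact Finset.measurableSet_biInter _ fun b _ => measurable_pi_apply b (measurableSet_singleton _)

lemma isPiSystem_cyl : IsPiSystem {S | ∃ (F : Finset ι) (a : ι → Bool), S = cyl F a} := by
  classical
  rintro _ ⟨F, a, rfl⟩ _ ⟨G, c, rfl⟩ ⟨ω, ha, hc⟩
  exact ⟨F ∪ G, ω, cyl_inter_cyl_of_mem ha hc⟩

lemma generateFrom_cyl : (inferInstance : MeasurableSpace (ι → Bool)) =
    MeasurableSpace.generateFrom {S | ∃ (F : Finset ι) (a : ι → Bool), S = cyl F a} := by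
  refine le_antisymm (iSup_le fun b => ?_) (MeasurableSpace.generateFrom_le ?_)
  · rw [← measurable_iff_comap_le]
    refine @measurable_to_bool _ (MeasurableSpace.generateFrom _) _
      (MeasurableSpace.measurableSet_generateFrom ⟨{b}, fun _ => true, ?_⟩)
    ext ω
    simp
  · rintro _ ⟨F, a, rfl⟩
    exact measurableSet_cyl F a

lemma ext_of_cyl {μ ν : Measure (ι → Bool)} [IsFiniteMeasure μ]
    (h : ∀ F a, μ (cyl F a) = ν (cyl F a)) : μ = ν := by
  refine ext_of_generate_finite _ generateFrom_cyl isPiSystem_cyl ?_ ?_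
  · rintro _ ⟨F, a, rfl⟩
    exact h F a
  · simpa [cyl] using h ∅ fun _ => true

variable [DecidableEq ι]

lemma cyl_inter_cyl_of_disjoint {F G : Finset ι} (hFG : Disjoint F G) (a c : ι → Bool) :
    cyl F a ∩ cyl G c = cyl (F ∪ G) (F.piecewise a c) := by
  refine cyl_inter_cyl_of_mem (fun b hb => F.piecewise_eq_of_mem a c hb)
    fun b hb => F.piecewise_eq_of_notMem a c (Finset.disjoint_right.1 hFG hb)

lemma update_preimage_cyl_of_ne {F : Finset ι} {a : ι → Bool} {b : ι} {v : Bool} (hb : b ∈ F)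
    (hv : v ≠ a b) : (Function.update · b v) ⁻¹' cyl F a = ∅ :=
  Set.eq_empty_of_forall_notMem fun ω hω => hv (by simpa using hω b hb)

lemma update_preimage_cyl_of_eq {F : Finset ι} {a : ι → Bool} {b : ι} {v : Bool}
    (hv : b ∈ F → v = a b) : (Function.update · b v) ⁻¹' cyl F a = cyl (F.erase b) a := by
  ext ω
  simp only [Set.mem_preimage, mem_cyl, Finset.mem_erase]
  refine ⟨fun h c hc => by simpa [hc.1] using h c hc.2, fun h c hc => ?_⟩
  rcases eq_or_ne c b with rfl | hcb
  · simpa using hv hc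
  · simpa [hcb] using h c ⟨hcb, hc⟩

lemma cyl_inter_cyl_singleton_of_eq {F : Finset ι} {a : ι → Bool} {b : ι} {v : Bool}
    (hv : b ∈ F → v = a b) : cyl F a ∩ cyl {b} (fun _ => v) =
      cyl (F.erase b) a ∩ cyl {b} (fun _ => v) := by
  ext ω
  simp only [Set.mem_inter_iff, mem_cyl, Finset.mem_erase, Finset.mem_singleton, forall_eq]
  refine and_congr_left fun hω => ⟨fun h c hc => h c hc.2, fun h c hc => ?_⟩
  rcases eq_or_ne c b with rfl | hcb
  · exact hω.trans (hv hc)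
  · exact h c ⟨hcb, hc⟩

end Cylinder

section Shift

variable {d : ℕ}

lemma measurable_shift (x : V d) : Measurable (shift x : Config d → Config d) :=
  measurable_pi_lambda _ fun _ => measurable_pi_apply _

lemma shift_shift (ω : Config d) (x y : V d) : shift x (shift y ω) = shift (x + y) ω := by
  ext b
  simp [shift, add_assoc]

@[simp] lemma shift_zero (ω : Config d) : shift 0 ω = ω := by
  ext b
  simp [shift]

/-- The translation by `x` on bonds, dual to `shift x`. -/
def bondShift (x : V d) : EdgeIx d ≃ EdgeIx d := (Equiv.addRight x).prodCongr (Equiv.refl _)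

lemma shift_preimage_cyl (x : V d) (F : Finset (EdgeIx d)) (a : EdgeIx d → Bool) :
    shift x ⁻¹' cyl F a = cyl (F.map (bondShift x).toEmbedding) (a ∘ (bondShift x).symm) := by
  ext ω
  simp only [Set.mem_preimage, mem_cyl, Finset.forall_mem_map, Function.comp_apply,
    Equiv.coe_toEmbedding, Equiv.symm_apply_apply]
  rfl

lemma eventually_disjoint_map_bondShift (i : Fin d) (F G : Finset (EdgeIx d)) :
    ∀ᶠ n : ℕ in atTop, Disjoint (G.map (bondShift (Pi.single i (n : ℤ))).toEmbedding) F := by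
  have hne : ∀ᶠ n : ℕ in atTop, ∀ b' ∈ G, ∀ b ∈ F, bondShift (Pi.single i (n : ℤ)) b' ≠ b := by
    simp_rw [Finset.eventually_all]
    intro b' _ b _
    filter_upwards [eventually_gt_atTop (b.1 i - b'.1 i).toNat] with n hn h
    have : b'.1 i + n = b.1 i := by simpa [bondShift] using congrFun (congrArg Prod.fst h) i
    omega
  filter_upwards [hne] with n hn
  rw [Finset.disjoint_left, Finset.forall_mem_map]
  exact fun b' hb' hF => hn b' hb' _ hF rfl

end Shift

namespace IsBernoulli

variable {d : ℕ} {q : ℝ} {P : Measure (Config d)}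

lemma measure_cyl (hP : IsBernoulli d q P) (F : Finset (EdgeIx d)) (a : EdgeIx d → Bool) :
    P (cyl F a) = ∏ b ∈ F, ENNReal.ofReal (if a b then q else 1 - q) :=
  hP.2 F a

lemma measure_cyl_map_bondShift (hP : IsBernoulli d q P) (x : V d) (F : Finset (EdgeIx d))
    (a : EdgeIx d → Bool) :
    P (cyl (F.map (bondShift x).toEmbedding) (a ∘ (bondShift x).symm)) = P (cyl F a) := by
  simp [hP.measure_cyl, Finset.prod_map]

lemma measurePreserving_shift (hP : IsBernoulli d q P) (x : V d) :
    MeasurePreserving (shift x) P P := by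
  have := hP.1
  have := Measure.isProbabilityMeasure_map (μ := P) (measurable_shift x).aemeasurable
  refine ⟨measurable_shift x, ext_of_cyl fun F a => ?_⟩
  rw [Measure.map_apply (measurable_shift x) (measurableSet_cyl F a), shift_preimage_cyl,
    hP.measure_cyl_map_bondShift]

lemma measure_cyl_inter_of_disjoint (hP : IsBernoulli d q P) {F G : Finset (EdgeIx d)}
    (hFG : Disjoint F G) (a c : EdgeIx d → Bool) :
    P (cyl F a ∩ cyl G c) = P (cyl F a) * P (cyl G c) := by
  rw [cyl_inter_cyl_of_disjoint hFG, hP.measure_cyl, Finset.prod_union hFG, hP.measure_cyl,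
    hP.measure_cyl]
  congr 1
  · exact Finset.prod_congr rfl fun b hb => by rw [F.piecewise_eq_of_mem a c hb]
  · exact Finset.prod_congr rfl fun b hb => by
      rw [F.piecewise_eq_of_notMem a c (Finset.disjoint_right.1 hFG hb)]

lemma measure_eq_zero_or_one_of_shift_invariant (hP : IsBernoulli d q P) (hd : 0 < d)
    {A : Set (Config d)} (hA : MeasurableSet A) (hinv : ∀ x, shift x ⁻¹' A = A) :
    P A = 0 ∨ P A = 1 := by
  have := hP.1
  let i : Fin d := ⟨0, hd⟩
  refine measure_eq_zero_or_one_of_mixing (l := atTop) generateFrom_cyl isPiSystem_cyl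
    (fun n : ℕ => hP.measurePreserving_shift (Pi.single i (n : ℤ))) ?_ hA fun _ => hinv _
  rintro _ ⟨G, c, rfl⟩ _ ⟨F, a, rfl⟩
  refine tendsto_const_nhds.congr' ?_
  filter_upwards [eventually_disjoint_map_bondShift i F G] with n hn
  rw [Measure.real, Measure.real, Measure.real, shift_preimage_cyl,
    hP.measure_cyl_inter_of_disjoint hn, hP.measure_cyl_map_bondShift, ENNReal.toReal_mul]

lemma smul_map_update_true (hP : IsBernoulli d q P) (b : EdgeIx d) :
    ENNReal.ofReal q • P.map (Function.update · b true) =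
      P.restrict (cyl {b} fun _ => true) := by
  have := hP.1
  refine (ext_of_cyl fun F a => ?_).symm
  rw [Measure.restrict_apply (measurableSet_cyl F a), Measure.smul_apply, smul_eq_mul,
    Measure.map_apply measurable_update_left (measurableSet_cyl F a)]
  by_cases hab : b ∈ F → true = a b
  · rw [cyl_inter_cyl_singleton_of_eq hab, update_preimage_cyl_of_eq hab,
      hP.measure_cyl_inter_of_disjoint (by simp), mul_comm, hP.measure_cyl {b}]
    simp
  · push Not at hab
    have hempty : cyl F a ∩ cyl {b} (fun _ => true) = ∅ :=
      Set.eq_empty_of_forall_notMem fun ω ⟨hF, hb⟩ =>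
        hab.2 ((hb b (by simp)).symm.trans (hF b hab.1))
    rw [hempty, update_preimage_cyl_of_ne hab.1 hab.2, measure_empty, mul_zero]

lemma measure_update_true_preimage_eq_zero (hP : IsBernoulli d q P) (hq : 0 < q) (b : EdgeIx d)
    {E : Set (Config d)} (hE : MeasurableSet E) (hE0 : P E = 0) :
    P ((Function.update · b true) ⁻¹' E) = 0 := by
  have h := DFunLike.congr_fun (hP.smul_map_update_true b) E
  rw [Measure.smul_apply, Measure.map_apply measurable_update_left hE, Measure.restrict_apply hE,
    measure_mono_null Set.inter_subset_left hE0, smul_eq_mul, mul_eq_zero] at h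
  exact h.resolve_left (by simpa using hq)

end IsBernoulli

section OpenBonds

variable {d : ℕ}

/-- The configuration `ω` with all bonds of `F` declared open. -/
def openBonds (F : Finset (EdgeIx d)) (ω : Config d) : Config d := F.piecewise (fun _ => true) ω

lemma openBonds_of_mem {F : Finset (EdgeIx d)} {b : EdgeIx d} (hb : b ∈ F) (ω : Config d) :
    openBonds F ω b = true :=
  F.piecewise_eq_of_mem _ _ hb

lemma openBonds_of_notMem {F : Finset (EdgeIx d)} {b : EdgeIx d} (hb : b ∉ F) (ω : Config d) :
    openBonds F ω b = ω b :=
  F.piecewise_eq_of_notMem _ _ hb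

lemma openBonds_insert (b : EdgeIx d) (F : Finset (EdgeIx d)) (ω : Config d) :
    openBonds (insert b F) ω = Function.update (openBonds F ω) b true :=
  F.piecewise_insert _ _ b

lemma IsBernoulli.measure_openBonds_preimage_eq_zero {q : ℝ} {P : Measure (Config d)}
    (hP : IsBernoulli d q P) (hq : 0 < q) (F : Finset (EdgeIx d)) {E : Set (Config d)}
    (hE : MeasurableSet E) (hE0 : P E = 0) : P (openBonds F ⁻¹' E) = 0 := by
  induction F using Finset.induction_on generalizing E with
  | empty => exact hE0
  | insert b F _ ih =>
    rw [show openBonds (insert b F) = (Function.update · b true) ∘ openBonds F from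
      funext (openBonds_insert b F), Set.preimage_comp]
    exact ih (measurable_update_left hE) (hP.measure_update_true_preimage_eq_zero hq b hE hE0)

end OpenBonds

/-! ### Disjoint trifurcations are outnumbered by their end points -/

section Connectivity

open Relation

variable {α : Type*} {r : α → α → Prop} {S T K K' : Set α} {x y z : α}

/-- `x` and `y` are joined by an `r`-path inside `S`. The trivial path is allowed, also when
`x ∉ S`. -/
def ConnIn (r : α → α → Prop) (S : Set α) : α → α → Prop :=
  ReflTransGen fun x y => x ∈ S ∧ y ∈ S ∧ r x y

namespace ConnIn

lemma refl : ConnIn r S x x := ReflTransGen.refl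

lemma single (hx : x ∈ S) (hy : y ∈ S) (h : r x y) : ConnIn r S x y :=
  ReflTransGen.single ⟨hx, hy, h⟩

lemma trans (h : ConnIn r S x y) (h' : ConnIn r S y z) : ConnIn r S x z := ReflTransGen.trans h h'

lemma symm [Std.Symm r] (h : ConnIn r S x y) : ConnIn r S y x :=
  have : Std.Symm fun x y => x ∈ S ∧ y ∈ S ∧ r x y := ⟨fun _ _ h => ⟨h.2.1, h.1, symm_of r h.2.2⟩⟩
  ReflTransGen.stdSymm.symm _ _ h

lemma mono (hST : S ⊆ T) (h : ConnIn r S x y) : ConnIn r T x y :=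
  ReflTransGen.mono (fun _ _ h => ⟨hST h.1, hST h.2.1, h.2.2⟩) _ _ h

lemma mem (h : ConnIn r S x y) (hx : x ∈ S) : y ∈ S := by
  rcases ReflTransGen.cases_tail h with rfl | ⟨_, _, h⟩
  exacts [hx, h.2.1]

lemma transfer {r' : α → α → Prop} (h : ConnIn r S x y)
    (hT : ∀ v ∈ S, ConnIn r S x v → v ∈ T)
    (hr : ∀ u ∈ S, ∀ v ∈ S, ConnIn r S x u → r u v → r' u v) : ConnIn r' T x y := by
  unfold ConnIn at h
  induction h with
  | refl => exact refl
  | tail hxu huv ih =>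
    exact ih.tail ⟨hT _ huv.1 hxu, hT _ huv.2.1 (hxu.tail huv),
      hr _ huv.1 _ huv.2.1 hxu huv.2.2⟩

lemma sdiff_of_forall_notMem (h : ConnIn r (S \ K) x y)
    (hK' : ∀ v, ConnIn r (S \ K) x v → v ∉ K') : ConnIn r (S \ K') x y :=
  h.transfer (fun v hv hxv => ⟨hv.1, hK' v hxv⟩) fun _ _ _ _ _ => id

lemma exists_first_hit (h : ConnIn r S x y) (hx : x ∉ K) (hy : y ∈ K) :
    ∃ u ∈ S \ K, ∃ v ∈ S ∩ K, ConnIn r (S \ K) x u ∧ r u v := by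
  suffices ∀ z, ConnIn r S x z → (z ∉ K ∧ ConnIn r (S \ K) x z) ∨
      ∃ u ∈ S \ K, ∃ v ∈ S ∩ K, ConnIn r (S \ K) x u ∧ r u v from
    (this y h).resolve_left fun h => h.1 hy
  intro z hz
  unfold ConnIn at hz
  induction hz with
  | refl => exact .inl ⟨hx, refl⟩
  | @tail u v _ huv ih =>
    rcases ih with ⟨hu, hxu⟩ | ih
    · by_cases hv : v ∈ K
      · exact .inr ⟨u, ⟨huv.1, hu⟩, v, ⟨huv.2.1, hv⟩, hxu, huv.2.2⟩
      · exact .inl ⟨hv, hxu.trans (single ⟨huv.1, hu⟩ ⟨huv.2.1, hv⟩ huv.2.2)⟩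
    · exact .inr ih

end ConnIn

/-- `t` lies in a component of `S \ K` which is attached to `K` within `S`. -/
def IsBranchPoint (r : α → α → Prop) (S K : Set α) (t : α) : Prop :=
  t ∈ S \ K ∧ ∃ k ∈ K, ConnIn r S t k

lemma IsBranchPoint.exists_connIn_sdiff {t : α} (ht : IsBranchPoint r S K t)
    (hK' : ∀ y, ConnIn r (S \ K) t y → y ∉ K') (hdisj : Disjoint K K') :
    ∃ k ∈ K, ConnIn r (S \ K') t k := by
  obtain ⟨⟨-, htK⟩, k, hk, htk⟩ := ht
  obtain ⟨u, hu, v, hv, htu, huv⟩ := htk.exists_first_hit htK hk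
  exact ⟨v, hv.2, (htu.sdiff_of_forall_notMem hK').trans
    (.single ⟨hu.1, hK' u htu⟩ ⟨hv.1, Set.disjoint_left.1 hdisj hv.2⟩ huv)⟩

/-- `K` is a trifurcation of `S` with respect to `B`: removing `K` leaves at least three distinct
branches which meet `B`. -/
def IsTrifurcation (r : α → α → Prop) (S B K : Set α) : Prop :=
  ∃ t : Fin 3 → α, (∀ i, t i ∈ B ∧ IsBranchPoint r S K (t i)) ∧
    Pairwise fun i j => ¬ ConnIn r (S \ K) (t i) (t j)

/-- `(K w)_{w ∈ W}` is a family of disjoint connected trifurcations of `S` with respect to `B`. -/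
structure IsTrifurcationFamily {ι : Type*} (r : α → α → Prop) (S B : Set α) (K : ι → Set α)
    (W : Finset ι) : Prop where
  subset : ∀ w ∈ W, K w ⊆ S
  pairwiseDisjoint : (W : Set ι).PairwiseDisjoint K
  connected : ∀ w ∈ W, ∀ k ∈ K w, ∀ k' ∈ K w, ConnIn r (K w) k k'
  isTrifurcation : ∀ w ∈ W, IsTrifurcation r S B (K w)

lemma exists_fin_three_not_and_not {p q : Fin 3 → Prop} (hp : ∀ i j, i ≠ j → p i → ¬ p j)
    (hq : ∀ i j, i ≠ j → q i → ¬ q j) : ∃ i, ¬ p i ∧ ¬ q i := by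
  by_contra! h
  have h01 := hp 0 1 (by decide)
  have h02 := hp 0 2 (by decide)
  have h12 := hp 1 2 (by decide)
  have k01 := hq 0 1 (by decide)
  have k02 := hq 0 2 (by decide)
  have k12 := hq 1 2 (by decide)
  have h0 := h 0
  have h1 := h 1
  have h2 := h 2
  tauto

namespace IsTrifurcationFamily

variable {ι : Type*} {B : Set α} {K : ι → Set α} {W : Finset ι} {w w' : ι}

lemma connIn_sdiff (h : IsTrifurcationFamily r S B K W) (hw : w ∈ W) (hw' : w' ∈ W)
    (hne : w' ≠ w) {k k' : α} (hk : k ∈ K w') (hk' : k' ∈ K w') : ConnIn r (S \ K w) k k' :=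
  (h.connected w' hw' k hk k' hk').mono fun _ hx =>
    ⟨h.subset w' hw' hx, Set.disjoint_left.1 (h.pairwiseDisjoint hw' hw hne) hx⟩

lemma exists_branchPoint [Std.Symm r] (h : IsTrifurcationFamily r S B K W) (hw : w ∈ W)
    (hw' : w' ∈ W) (hne : w' ≠ w) (b : α) :
    ∃ t ∈ B, IsBranchPoint r S (K w) t ∧ ¬ ConnIn r (S \ K w) b t ∧
      ∀ y, ConnIn r (S \ K w) t y → y ∉ K w' := by
  obtain ⟨t, ht, htt⟩ := h.isTrifurcation w hw
  obtain ⟨i, hiK, hib⟩ := exists_fin_three_not_and_not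
    (p := fun i => ∃ y, ConnIn r (S \ K w) (t i) y ∧ y ∈ K w')
    (q := fun i => ConnIn r (S \ K w) b (t i))
    (fun i j hij ⟨y, hiy, hy⟩ ⟨z, hjz, hz⟩ =>
      htt hij ((hiy.trans (h.connIn_sdiff hw hw' hne hy hz)).trans (hjz.symm)))
    fun i j hij hi hj => htt hij ((hi.symm).trans hj)
  exact ⟨t i, (ht i).1, (ht i).2, hib, fun y hy hyK => hiK ⟨y, hy, hyK⟩⟩

/- A branch with the fewest vertices contains no further trifurcation: such a trifurcation would
have a strictly smaller branch inside. -/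
lemma exists_branch_disjoint [Std.Symm r] (h : IsTrifurcationFamily r S B K W)
    (hS : S.Finite) (hW : W.Nonempty) :
    ∃ w ∈ W, ∃ b ∈ B, IsBranchPoint r S (K w) b ∧
      ∀ w' ∈ W, w' ≠ w → ∀ x, ConnIn r (S \ K w) b x → x ∉ K w' := by
  let P (q : ι × α) : Prop := q.1 ∈ W ∧ q.2 ∈ B ∧ IsBranchPoint r S (K q.1) q.2
  let D (q : ι × α) : Set α := {x | ConnIn r (S \ K q.1) q.2 x}
  have hne : {q | P q}.Nonempty := by
    obtain ⟨w, hw⟩ := hW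
    obtain ⟨t, ht, -⟩ := h.isTrifurcation w hw
    exact ⟨(w, t 0), hw, ht 0⟩
  obtain ⟨⟨w, b⟩, ⟨hw, hbB, hb⟩, hmin⟩ :=
    exists_minimalFor_of_wellFoundedLT P (fun q => (D q).ncard) hne
  refine ⟨w, hw, b, hbB, hb, fun w' hw' hww' x hbx hx => ?_⟩
  obtain ⟨t, htB, ht, -, htK⟩ := h.exists_branchPoint hw' hw hww'.symm x
  obtain ⟨k, hk, htk⟩ := ht.exists_connIn_sdiff htK (h.pairwiseDisjoint hw' hw hww')
  have hbt : ConnIn r (S \ K w) b t :=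
    (hbx.trans (h.connIn_sdiff hw hw' hww' hx hk)).trans (htk.symm)
  have hss : D (w', t) ⊂ D (w, b) :=
    ⟨fun y hy => hbt.trans (hy.sdiff_of_forall_notMem htK), fun hsub =>
      ((hsub hbx).mem ht.1).2 hx⟩
  have hfin : (D (w, b)).Finite := hS.subset fun y hy => (ConnIn.mem hy hb.1).1
  have hlt := Set.ncard_lt_ncard hss hfin
  exact hlt.not_ge (hmin ⟨hw', htB, ht⟩ hlt.le)

lemma erase [DecidableEq ι] [Std.Symm r] (h : IsTrifurcationFamily r S B K W) (hw : w ∈ W)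
    {b : α} (hb : IsBranchPoint r S (K w) b)
    (hbK : ∀ w' ∈ W, w' ≠ w → ∀ x, ConnIn r (S \ K w) b x → x ∉ K w') :
    IsTrifurcationFamily r S {x ∈ B | ¬ ConnIn r (S \ K w) b x} K (W.erase w) := by
  refine ⟨fun w' hw' => h.subset w' (Finset.mem_of_mem_erase hw'),
    h.pairwiseDisjoint.subset (Finset.erase_subset _ _),
    fun w' hw' => h.connected w' (Finset.mem_of_mem_erase hw'), fun w' hw' => ?_⟩
  obtain ⟨hne, hw'⟩ := Finset.mem_erase.1 hw'
  have hdisj := h.pairwiseDisjoint hw hw' hne.symm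
  -- An end point in the branch of `b` is exchanged for one in another branch of `K w`.
  have hrep : ∀ β ∈ B, β ∈ S \ K w' → ∃ β' ∈ B, ¬ ConnIn r (S \ K w) b β' ∧
      β' ∈ S \ K w' ∧ ConnIn r (S \ K w') β β' := by
    intro β hβB hβ
    by_cases hbβ : ConnIn r (S \ K w) b β
    · obtain ⟨t, htB, ht, hbt, htK⟩ := h.exists_branchPoint hw hw' hne b
      obtain ⟨k, hk, htk⟩ := ht.exists_connIn_sdiff htK hdisj
      obtain ⟨k', hk', hbk'⟩ := hb.exists_connIn_sdiff (hbK w' hw' hne) hdisj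
      have hβb := (hbβ.sdiff_of_forall_notMem (hbK w' hw' hne)).symm
      exact ⟨t, htB, hbt, ⟨ht.1.1, htK t .refl⟩, (hβb.trans hbk').trans
        ((h.connIn_sdiff hw' hw hne.symm hk' hk).trans (htk.symm))⟩
    · exact ⟨β, hβB, hbβ, hβ, .refl⟩
  obtain ⟨t, ht, htt⟩ := h.isTrifurcation w' hw'
  choose t' ht'B ht'b ht'S htt' using fun i => hrep (t i) (ht i).1 (ht i).2.1
  refine ⟨t', fun i => ⟨⟨ht'B i, ht'b i⟩, ht'S i, ?_⟩, fun i j hij hij' =>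
    htt hij (((htt' i).trans hij').trans ((htt' j).symm))⟩
  obtain ⟨k, hk, htk⟩ := (ht i).2.2
  exact ⟨k, hk, (((htt' i).mono Set.sdiff_subset).symm).trans htk⟩

theorem card_le_ncard [Std.Symm r] (h : IsTrifurcationFamily r S B K W) (hS : S.Finite)
    (hB : B.Finite) : W.card ≤ B.ncard := by
  classical
  induction hn : W.card generalizing W B with
  | zero => exact Nat.zero_le _
  | succ n ih =>
    obtain ⟨w, hw, b, hbB, hb, hbK⟩ :=
      h.exists_branch_disjoint hS (Finset.card_pos.1 (by omega))
    have hss : {x ∈ B | ¬ ConnIn r (S \ K w) b x} ⊂ B :=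
      ⟨fun x hx => hx.1, fun hsub => (hsub hbB).2 .refl⟩
    have hle := ih (h.erase hw hb hbK) (hB.subset hss.subset)
      (by rw [Finset.card_erase_of_mem hw, hn, Nat.add_sub_cancel])
    exact hle.trans_lt (Set.ncard_lt_ncard hss hB)

end IsTrifurcationFamily

end Connectivity

/-! ### Infinite components -/

section InfiniteComponents

variable {α β : Type*} {r : α → α → Prop} {r' : β → β → Prop} {x y : α}

/-- `x` lies in an infinite component of `S`. -/
def InfinitelyConn (r : α → α → Prop) (S : Set α) (x : α) : Prop := {y | ConnIn r S x y}.Infinite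

lemma ConnIn.congr {r' : α → α → Prop} {S : Set α} (h : ∀ u ∈ S, ∀ v ∈ S, r u v ↔ r' u v) :
    ConnIn r S x y ↔ ConnIn r' S x y :=
  ⟨fun hxy => hxy.transfer (fun _ hv _ => hv) fun u hu v hv _ => (h u hu v hv).1,
    fun hxy => hxy.transfer (fun _ hv _ => hv) fun u hu v hv _ => (h u hu v hv).2⟩

lemma InfinitelyConn.of_connIn [Std.Symm r] {S : Set α} (h : InfinitelyConn r S x)
    (hxy : ConnIn r S x y) : InfinitelyConn r S y :=
  h.mono fun _ hz => hxy.symm.trans hz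

lemma ConnIn.map {f : α → β} {S : Set α} {T : Set β} (h : ConnIn r S x y) (hf : Set.MapsTo f S T)
    (hr : ∀ u v, r u v → r' (f u) (f v)) : ConnIn r' T (f x) (f y) :=
  Relation.ReflTransGen.lift f (fun _ _ huv => ⟨hf huv.1, hf huv.2.1, hr _ _ huv.2.2⟩) _ _ h

lemma connIn_preimage_relIso (e : r ≃r r') (S : Set β) :
    ConnIn r (e ⁻¹' S) x y ↔ ConnIn r' S (e x) (e y) := by
  refine ⟨fun h => h.map (fun _ hv => hv) fun _ _ => e.map_rel_iff.2, fun h => ?_⟩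
  simpa using h.map (T := e ⁻¹' S) (f := e.symm) (fun v hv => by simpa using hv)
    fun _ _ => e.symm.map_rel_iff.2

lemma infinitelyConn_preimage_relIso (e : r ≃r r') (S : Set β) :
    InfinitelyConn r (e ⁻¹' S) x ↔ InfinitelyConn r' S (e x) := by
  simp only [InfinitelyConn, connIn_preimage_relIso]
  exact ⟨mt (Set.Finite.preimage e.injective.injOn), mt (Set.Finite.of_preimage · e.surjective)⟩

/-- `K` is connected and at least three distinct infinite components of `Kᶜ` are adjacent to it. -/
def IsInfiniteTrifurcation (r : α → α → Prop) (K : Set α) : Prop :=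
  (∀ k ∈ K, ∀ k' ∈ K, ConnIn r K k k') ∧ ∃ t : Fin 3 → α,
    (∀ i, t i ∉ K ∧ InfinitelyConn r Kᶜ (t i) ∧ ∃ k ∈ K, r k (t i)) ∧
    Pairwise fun i j => ¬ ConnIn r Kᶜ (t i) (t j)

lemma IsInfiniteTrifurcation.of_preimage_relIso (e : r ≃r r') {K : Set β}
    (h : IsInfiniteTrifurcation r (e ⁻¹' K)) : IsInfiniteTrifurcation r' K := by
  obtain ⟨hK, t, ht, htt⟩ := h
  refine ⟨fun k hk k' hk' => ?_, e ∘ t, fun i => ?_, fun i j hij hcon => htt hij ?_⟩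
  · simpa using (connIn_preimage_relIso e K).1
      (hK (e.symm k) (by simpa using hk) (e.symm k') (by simpa using hk'))
  · obtain ⟨htK, hinf, k, hk, hkt⟩ := ht i
    exact ⟨htK, (infinitelyConn_preimage_relIso e Kᶜ).1 hinf, e k, hk, e.map_rel_iff.2 hkt⟩
  · exact (connIn_preimage_relIso e Kᶜ).2 hcon

/- Every vertex of the component off `K` is reached from one of the finitely many neighbours
of `K`. -/
lemma InfinitelyConn.exists_branch [Std.Symm r] (hr : ∀ x, {y | r x y}.Finite) {K : Set α}
    (hK : K.Finite) (hx : x ∈ K) (h : InfinitelyConn r Set.univ x) :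
    ∃ y ∉ K, InfinitelyConn r Kᶜ y ∧ (∃ k ∈ K, r k y) ∧ ConnIn r Set.univ x y := by
  by_contra! hcon
  let N : Set α := {u | (u ∉ K ∧ ∃ k ∈ K, r k u) ∧ ConnIn r Set.univ x u}
  have hN : N.Finite := (hK.biUnion fun k _ => hr k).subset fun u ⟨⟨_, k, hk, hku⟩, _⟩ =>
    Set.mem_biUnion hk hku
  have hbranch : ∀ u ∈ N, {z | ConnIn r Kᶜ u z}.Finite := fun u ⟨⟨huK, hku⟩, hxu⟩ =>
    Set.not_infinite.1 fun hinf => hcon u huK hinf hku hxu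
  refine h ((hK.union (hN.biUnion hbranch)).subset fun z hz => ?_)
  by_cases hzK : z ∈ K
  · exact .inl hzK
  · obtain ⟨u, hu, k, hk, hzu, huk⟩ := (ConnIn.symm hz).exists_first_hit hzK hx
    have huz : ConnIn r Kᶜ u z := (hzu.mono fun _ hv => hv.2).symm
    exact .inr (Set.mem_biUnion ⟨⟨hu.2, k, hk.2, symm_of r huk⟩,
      hz.trans (huz.mono (Set.subset_univ _)).symm⟩ huz)

lemma measurable_connIn {X : Type*} [MeasurableSpace X] [Countable α] {r : X → α → α → Prop}
    (hr : ∀ x y, Measurable fun ω => r ω x y) (S : Set α) (x y : α) :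
    Measurable fun ω => ConnIn (r ω) S x y := by
  have hstep (u v : α) : Measurable fun ω => u ∈ S ∧ v ∈ S ∧ r ω u v :=
    measurable_const.and (measurable_const.and (hr u v))
  have hchain (l : List α) (a : α) :
      Measurable fun ω => (a :: l).IsChain fun u v => u ∈ S ∧ v ∈ S ∧ r ω u v := by
    induction l generalizing a with
    | nil => simp
    | cons b l ih => simpa only [List.isChain_cons_cons] using (hstep a b).and (ih b)
  have hiff (ω : X) : ConnIn (r ω) S x y ↔
      ∃ l : List α, (x :: l).IsChain (fun u v => u ∈ S ∧ v ∈ S ∧ r ω u v) ∧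
        (x :: l).getLast (List.cons_ne_nil _ _) = y :=
    ⟨List.exists_isChain_cons_of_relationReflTransGen,
      fun ⟨l, hl, hy⟩ => List.relationReflTransGen_of_exists_isChain_cons l hl hy⟩
  simp_rw [hiff]
  exact .exists fun l => (hchain l x).and measurable_const

lemma measurable_infinitelyConn {X : Type*} [MeasurableSpace X] [Countable α]
    {r : X → α → α → Prop} (hr : ∀ x y, Measurable fun ω => r ω x y) (S : Set α) (x : α) :
    Measurable fun ω => InfinitelyConn (r ω) S x := by
  have hiff (ω : X) : InfinitelyConn (r ω) S x ↔ ∀ F : Finset α, ∃ y, y ∉ F ∧ ConnIn (r ω) S x y :=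
    ⟨fun h F => (h.exists_notMem_finset F).imp fun _ hy => ⟨hy.2, hy.1⟩, fun h hfin =>
      let ⟨_, hy, hxy⟩ := h hfin.toFinset
      hy (hfin.mem_toFinset.2 hxy)⟩
  simp_rw [hiff]
  exact .forall fun F => .exists fun y => measurable_const.and (measurable_connIn hr S x y)

end InfiniteComponents

/-! ### Open clusters of the lattice -/

section Lattice

variable {d : ℕ} {R : ℕ} {ω : Config d} {x y : V d}

/-- `x` and `y` are neighbours joined by an open bond. -/
def OpenAdj (ω : Config d) (x y : V d) : Prop := y - x ∈ Ud d ∧ edgeOpen ω x (y - x)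

lemma unitVec_mem_Ud (i : Fin d) : unitVec d i ∈ Ud d := by simp [Ud]

lemma neg_unitVec_mem_Ud (i : Fin d) : -unitVec d i ∈ Ud d := by simp [Ud]

lemma openAdj_iff : OpenAdj ω x y ↔ ∃ i, (y = x + unitVec d i ∧ ω (x, i) = true) ∨
    (x = y + unitVec d i ∧ ω (y, i) = true) := by
  constructor
  · rintro ⟨-, i, ⟨hi, hω⟩ | ⟨hi, hω⟩⟩
    · exact ⟨i, .inl ⟨(add_eq_of_eq_sub' hi.symm).symm, hω⟩⟩
    · obtain rfl : y = x - unitVec d i := by rw [sub_eq_add_neg, ← hi, add_sub_cancel]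
      exact ⟨i, .inr ⟨by simp, hω⟩⟩
  · rintro ⟨i, ⟨rfl, hω⟩ | ⟨rfl, hω⟩⟩
    · exact ⟨by simp [unitVec_mem_Ud], i, .inl ⟨by simp, hω⟩⟩
    · exact ⟨by simp [neg_unitVec_mem_Ud], i, .inr ⟨by simp, by simpa using hω⟩⟩

instance (ω : Config d) : Std.Symm (OpenAdj ω) where
  symm x y := by
    simp only [openAdj_iff]
    exact fun ⟨i, h⟩ => ⟨i, h.symm⟩

lemma edgeOpen_shift_zero_iff (ω : Config d) (x e : V d) :
    edgeOpen (shift x ω) 0 e ↔ edgeOpen ω x e := by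
  simp [edgeOpen, shift, neg_add_eq_sub]

lemma openAdj_shift_iff (w : V d) :
    OpenAdj (shift w ω) x y ↔ OpenAdj ω (x + w) (y + w) := by
  simp only [openAdj_iff, shift, add_right_comm _ w, add_left_inj]

/-- Translation by `w` as an isomorphism of open graphs. -/
def shiftRelIso (w : V d) (ω : Config d) : OpenAdj (shift w ω) ≃r OpenAdj ω where
  toEquiv := Equiv.addRight w
  map_rel_iff' := (openAdj_shift_iff w).symm

lemma connIn_univ_shift (w : V d) : ConnIn (OpenAdj (shift w ω)) Set.univ x y ↔
    ConnIn (OpenAdj ω) Set.univ (x + w) (y + w) :=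
  connIn_preimage_relIso (shiftRelIso w ω) Set.univ

lemma infinitelyConn_univ_shift (w : V d) : InfinitelyConn (OpenAdj (shift w ω)) Set.univ x ↔
    InfinitelyConn (OpenAdj ω) Set.univ (x + w) :=
  infinitelyConn_preimage_relIso (shiftRelIso w ω) Set.univ

lemma finite_setOf_openAdj (ω : Config d) (x : V d) : {y | OpenAdj ω x y}.Finite :=
  ((Ud d).finite_toSet.image (x + ·)).subset fun y hy => ⟨y - x, hy.1, add_sub_cancel x y⟩

lemma connIn_univ_of_isOpenPath {γ : ℕ → V d} {n : ℕ} (h : IsOpenPath ω γ n) :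
    ConnIn (OpenAdj ω) Set.univ (γ 0) (γ n) := by
  induction n with
  | zero => exact .refl
  | succ n ih =>
    exact (ih fun k hk => h k (by omega)).trans
      (.single (Set.mem_univ _) (Set.mem_univ _) (h n n.lt_succ_self))

lemma ConnIn.exists_isOpenPath (h : ConnIn (OpenAdj ω) Set.univ x y) :
    ∃ (γ : ℕ → V d) (n : ℕ), γ 0 = x ∧ IsOpenPath ω γ n ∧ γ n = y := by
  unfold ConnIn at h
  induction h with
  | refl => exact ⟨fun _ => x, 0, rfl, fun k hk => by omega, rfl⟩
  | @tail u v _ huv ih =>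
    obtain ⟨γ, n, hγ0, hγ, hγn⟩ := ih
    refine ⟨fun k => if k ≤ n then γ k else v, n + 1, by simp [hγ0], fun k hk => ?_, by simp⟩
    rcases (Nat.lt_succ_iff.1 hk).lt_or_eq with hkn | rfl
    · simpa only [if_pos hkn.le, if_pos (Nat.succ_le_iff.2 hkn)] using hγ k hkn
    · simpa [hγn] using! huv.2.2

/-- The box `[-R, R]^d`. -/
def box (d R : ℕ) : Finset (V d) := Fintype.piFinset fun _ => Finset.Icc (-(R : ℤ)) R

lemma mem_box : x ∈ box d R ↔ ∀ i, -(R : ℤ) ≤ x i ∧ x i ≤ R := by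
  simp [box]

lemma card_box (d R : ℕ) : (box d R).card = (2 * R + 1) ^ d := by
  simp only [box, Fintype.card_piFinset, Int.card_Icc, Finset.prod_const, Finset.card_univ,
    Fintype.card_fin]
  congr 1
  omega

lemma box_mono {R' : ℕ} (h : R ≤ R') : box d R ⊆ box d R' :=
  Fintype.piFinset_subset _ _ fun _ => Finset.Icc_subset_Icc (by omega) (by omega)

lemma inBox_iff_mem_box : inBox x R ↔ x ∈ box d R := by
  rw [mem_box]
  refine forall_congr' fun i => ?_
  rw [abs_le]
  norm_cast

lemma exists_subset_box (F : Finset (V d)) : ∃ R, F ⊆ box d R := by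
  refine ⟨F.sup fun x => ∑ i, (x i).natAbs, fun x hx => mem_box.2 fun i => ?_⟩
  have hi : (x i).natAbs ≤ ∑ i, (x i).natAbs :=
    Finset.single_le_sum (f := fun i => (x i).natAbs) (fun _ _ => Nat.zero_le _)
      (Finset.mem_univ i)
  have hF : ∑ i, (x i).natAbs ≤ F.sup fun x => ∑ i, (x i).natAbs :=
    Finset.le_sup (f := fun x : V d => ∑ i, (x i).natAbs) hx
  omega

lemma OpenAdj.mem_box_succ (h : OpenAdj ω x y) (hx : x ∈ box d R) : y ∈ box d (R + 1) := by
  have hunit (i j : Fin d) : 0 ≤ unitVec d i j ∧ unitVec d i j ≤ 1 := by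
    unfold unitVec
    split_ifs <;> simp
  rw [mem_box] at hx ⊢
  intro j
  have hj := hx j
  obtain ⟨i, ⟨rfl, -⟩ | ⟨rfl, -⟩⟩ := openAdj_iff.1 h <;>
  · have := hunit i j
    simp only [Pi.add_apply] at hj ⊢
    omega

lemma memCluster_iff : memCluster ω x ↔ InfinitelyConn (OpenAdj ω) Set.univ x := by
  constructor
  · intro h hfin
    obtain ⟨R, hR⟩ := exists_subset_box hfin.toFinset
    obtain ⟨γ, n, rfl, hγ, hn⟩ := h R
    exact hn (inBox_iff_mem_box.2 (hR (hfin.mem_toFinset.2 (connIn_univ_of_isOpenPath hγ))))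
  · intro h R
    obtain ⟨y, hxy, hy⟩ := h.exists_notMem_finset (box d R)
    obtain ⟨γ, n, hγ0, hγ, rfl⟩ := ConnIn.exists_isOpenPath hxy
    exact ⟨γ, n, hγ0, hγ, mt inBox_iff_mem_box.1 hy⟩

lemma measurable_openAdj (x y : V d) : Measurable fun ω : Config d => OpenAdj ω x y := by
  have hbond (b : EdgeIx d) : Measurable fun ω : Config d => ω b = true :=
    measurableSet_setOfPred.1 (measurable_pi_apply (X := fun _ => Bool) b (.singleton true))
  simp_rw [openAdj_iff]
  exact .exists fun i =>
    (measurable_const.and (hbond _)).or (measurable_const.and (hbond _))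

lemma measurableSet_cluZero : MeasurableSet (cluZero d) :=
  measurableSet_setOfPred.2 (by
    simpa only [memCluster_iff] using measurable_infinitelyConn measurable_openAdj Set.univ 0)

/-- The bonds with both end points in the box `[-R, R]^d`. -/
def boxEdges (d R : ℕ) : Finset (EdgeIx d) :=
  (box d R ×ˢ Finset.univ).filter fun b => b.1 + unitVec d b.2 ∈ box d R

lemma mem_boxEdges {b : EdgeIx d} :
    b ∈ boxEdges d R ↔ b.1 ∈ box d R ∧ b.1 + unitVec d b.2 ∈ box d R := by
  simp [boxEdges]

lemma exists_openAdj_sum_natAbs_lt (h : ∀ b ∈ boxEdges d R, ω b = true) (hx : x ∈ box d R)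
    (hx0 : x ≠ 0) :
    ∃ y ∈ box d R, OpenAdj ω x y ∧ ∑ i, (y i).natAbs < ∑ i, (x i).natAbs := by
  obtain ⟨i, hi⟩ := Function.ne_iff.1 hx0
  rw [Pi.zero_apply] at hi
  obtain ⟨y, hxy, hyi, hyj⟩ : ∃ y : V d, (y = x + unitVec d i ∨ x = y + unitVec d i) ∧
      (y i).natAbs < (x i).natAbs ∧ ∀ j ≠ i, y j = x j := by
    rcases hi.lt_or_gt with hi | hi
    · have hlt : (x i + 1).natAbs < (x i).natAbs := by omega
      exact ⟨x + unitVec d i, .inl rfl, by simpa [unitVec] using hlt,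
        fun j hj => by simp [unitVec, hj]⟩
    · have hlt : (x i - 1).natAbs < (x i).natAbs := by omega
      exact ⟨x - unitVec d i, .inr (by simp), by simpa [unitVec] using hlt,
        fun j hj => by simp [unitVec, hj]⟩
  have hle (j : Fin d) : (y j).natAbs ≤ (x j).natAbs := by
    rcases eq_or_ne j i with rfl | hj
    · exact hyi.le
    · rw [hyj j hj]
  have hy : y ∈ box d R := mem_box.2 fun j => by
    have := mem_box.1 hx j
    have := hle j
    omega
  refine ⟨y, hy, openAdj_iff.2 ⟨i, ?_⟩,
    Finset.sum_lt_sum (fun j _ => hle j) ⟨i, Finset.mem_univ i, hyi⟩⟩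
  exact hxy.imp (fun hyx => ⟨hyx, h _ (mem_boxEdges.2 ⟨hx, hyx ▸ hy⟩)⟩)
    fun hxy => ⟨hxy, h _ (mem_boxEdges.2 ⟨hy, hxy ▸ hx⟩)⟩

lemma connIn_box_zero (h : ∀ b ∈ boxEdges d R, ω b = true) (hx : x ∈ box d R) :
    ConnIn (OpenAdj ω) (box d R) x 0 := by
  induction hn : ∑ i, (x i).natAbs using Nat.strong_induction_on generalizing x with
  | _ n ih =>
    by_cases hx0 : x = 0
    · exact hx0 ▸ .refl
    · obtain ⟨y, hy, hxy, hlt⟩ := exists_openAdj_sum_natAbs_lt h hx hx0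
      exact (ConnIn.single hx hy hxy).trans (ih _ (hn ▸ hlt) hy rfl)

lemma connIn_box (h : ∀ b ∈ boxEdges d R, ω b = true) (hx : x ∈ box d R) (hy : y ∈ box d R) :
    ConnIn (OpenAdj ω) (box d R) x y :=
  (connIn_box_zero h hx).trans (connIn_box_zero h hy).symm

lemma OpenAdj.openBonds (h : OpenAdj ω x y) (F : Finset (EdgeIx d)) :
    OpenAdj (openBonds F ω) x y := by
  have hF {b : EdgeIx d} (hb : ω b = true) : SRWPC.openBonds F ω b = true := by
    by_cases hbF : b ∈ F
    · exact openBonds_of_mem hbF ω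
    · rwa [openBonds_of_notMem hbF]
  rw [openAdj_iff] at h ⊢
  exact h.imp fun i => Or.imp (And.imp_right hF) (And.imp_right hF)

lemma openAdj_openBonds_boxEdges_iff (hx : x ∉ box d R) :
    OpenAdj (openBonds (boxEdges d R) ω) x y ↔ OpenAdj ω x y := by
  refine ⟨fun h => ?_, fun h => h.openBonds _⟩
  rw [openAdj_iff] at h ⊢
  refine h.imp fun i => Or.imp ?_ ?_ <;> rintro ⟨hxy, hω⟩ <;> refine ⟨hxy, ?_⟩
  · rwa [openBonds_of_notMem fun hb => hx (mem_boxEdges.1 hb).1] at hω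
  · rwa [openBonds_of_notMem fun hb => hx (hxy ▸ (mem_boxEdges.1 hb).2)] at hω

lemma connIn_openBonds_boxEdges_iff :
    ConnIn (OpenAdj (openBonds (boxEdges d R) ω)) (box d R : Set (V d))ᶜ x y ↔
      ConnIn (OpenAdj ω) (box d R : Set (V d))ᶜ x y :=
  ConnIn.congr fun _ hu _ _ => openAdj_openBonds_boxEdges_iff hu

end Lattice

/-! ### Uniqueness of the infinite cluster -/

section DistinctClusters

variable {d k R : ℕ} {K : Set (V d)} {ω : Config d}

/-- The event that `K` meets at least `k` distinct infinite open clusters. -/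
def distinctClusters (d k : ℕ) (K : Set (V d)) : Set (Config d) :=
  {ω | ∃ t : Fin k → V d, (∀ i, t i ∈ K ∧ InfinitelyConn (OpenAdj ω) Set.univ (t i)) ∧
    Pairwise fun i j => ¬ ConnIn (OpenAdj ω) Set.univ (t i) (t j)}

lemma measurableSet_distinctClusters : MeasurableSet (distinctClusters d k K) :=
  measurableSet_setOfPred.2 <| .exists fun _ =>
    (Measurable.forall fun _ => measurable_const.and
      (measurable_infinitelyConn measurable_openAdj _ _)).and <|
    .forall fun _ => .forall fun _ => measurable_const.imp
      (measurable_connIn measurable_openAdj _ _ _).not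

lemma shift_preimage_distinctClusters_univ (w : V d) :
    shift w ⁻¹' distinctClusters d k Set.univ = distinctClusters d k Set.univ := by
  ext ω
  simp only [distinctClusters, Set.mem_preimage, Set.mem_ofPred_eq, infinitelyConn_univ_shift,
    connIn_univ_shift, Set.mem_univ, true_and]
  exact ⟨fun ⟨t, h⟩ => ⟨fun i => t i + w, h⟩, fun ⟨t, h⟩ => ⟨fun i => t i - w, by simpa using h⟩⟩

lemma mem_distinctClusters_two {x y : V d} (hx : x ∈ K) (hy : y ∈ K)
    (hxinf : InfinitelyConn (OpenAdj ω) Set.univ x)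
    (hyinf : InfinitelyConn (OpenAdj ω) Set.univ y)
    (hxy : ¬ ConnIn (OpenAdj ω) Set.univ x y) : ω ∈ distinctClusters d 2 K := by
  refine ⟨![x, y], Fin.forall_fin_two.2 ⟨⟨hx, hxinf⟩, hy, hyinf⟩, fun i j hij => ?_⟩
  fin_cases i <;> fin_cases j
  exacts [absurd rfl hij, hxy, mt ConnIn.symm hxy, absurd rfl hij]

lemma cons_mem_distinctClusters {x : V d} {t : Fin k → V d} (hx : x ∈ K)
    (hxinf : InfinitelyConn (OpenAdj ω) Set.univ x)
    (ht : ∀ i, t i ∈ K ∧ InfinitelyConn (OpenAdj ω) Set.univ (t i))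
    (htt : Pairwise fun i j => ¬ ConnIn (OpenAdj ω) Set.univ (t i) (t j))
    (hxt : ∀ i, ¬ ConnIn (OpenAdj ω) Set.univ x (t i)) : ω ∈ distinctClusters d (k + 1) K := by
  refine ⟨Fin.cons x t, Fin.forall_fin_succ.2 ⟨⟨hx, hxinf⟩, ht⟩, fun i j hij => ?_⟩
  induction i using Fin.cases <;> induction j using Fin.cases
  · exact absurd rfl hij
  · exact hxt _
  · exact mt ConnIn.symm (hxt _)
  · exact htt fun h => hij (congrArg Fin.succ h)

lemma distinctClusters_univ_subset_iUnion_box :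
    distinctClusters d k Set.univ ⊆ ⋃ R, distinctClusters d k (box d R) := by
  rintro ω ⟨t, ht, htt⟩
  obtain ⟨R, hR⟩ := exists_subset_box (Finset.univ.image t)
  exact Set.mem_iUnion.2 ⟨R, t, fun i =>
    ⟨hR (Finset.mem_image_of_mem t (Finset.mem_univ i)), (ht i).2⟩, htt⟩

/-- The event that every infinite open cluster meets `K`. -/
def infiniteClustersMeet (d : ℕ) (K : Set (V d)) : Set (Config d) :=
  {ω | ∀ x, InfinitelyConn (OpenAdj ω) Set.univ x → ∃ k ∈ K, ConnIn (OpenAdj ω) Set.univ x k}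

lemma openBonds_boxEdges_mem_infiniteClustersMeet (h : ω ∈ infiniteClustersMeet d (box d R)) :
    openBonds (boxEdges d R) ω ∈ infiniteClustersMeet d (box d R) := by
  intro x hx
  by_contra! hcon
  have hxω {v : V d} (hv : ConnIn (OpenAdj (openBonds (boxEdges d R) ω)) Set.univ x v) :
      ConnIn (OpenAdj ω) Set.univ x v :=
    hv.transfer (fun _ h _ => h) fun u _ _ _ hxu huv =>
      (openAdj_openBonds_boxEdges_iff fun hu => hcon u hu hxu).1 huv
  obtain ⟨k, hk, hxk⟩ := h x (hx.mono fun _ => hxω)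
  exact hcon k hk (hxk.transfer (fun _ h _ => h) fun _ _ _ _ _ huv => huv.openBonds _)

lemma infiniteClustersMeet_box_subset : infiniteClustersMeet d (box d R) ⊆
    openBonds (boxEdges d R) ⁻¹' (distinctClusters d 2 Set.univ)ᶜ := by
  rintro ω hω ⟨t, ht, htt⟩
  have hmeet := openBonds_boxEdges_mem_infiniteClustersMeet hω
  obtain ⟨k, hk, htk⟩ := hmeet (t 0) (ht 0).2
  obtain ⟨k', hk', htk'⟩ := hmeet (t 1) (ht 1).2
  have hkk' := connIn_box (fun b hb => openBonds_of_mem hb ω) hk hk'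
  exact htt zero_ne_one ((htk.trans (hkk'.mono (Set.subset_univ _))).trans htk'.symm)

lemma distinctClusters_subset_succ_union (k : ℕ) : distinctClusters d k Set.univ ⊆
    distinctClusters d (k + 1) Set.univ ∪ ⋃ R, infiniteClustersMeet d (box d R) := by
  rintro ω ⟨t, ht, htt⟩
  obtain ⟨R, hR⟩ := exists_subset_box (Finset.univ.image t)
  by_cases hω : ω ∈ infiniteClustersMeet d (box d R)
  · exact .inr (Set.mem_iUnion.2 ⟨R, hω⟩)
  · simp only [infiniteClustersMeet, Set.mem_ofPred_eq, not_forall, not_exists, not_and] at hω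
    obtain ⟨x, hx, hxR⟩ := hω
    exact .inl (cons_mem_distinctClusters (Set.mem_univ x) hx ht htt fun i =>
      hxR _ (hR (Finset.mem_image_of_mem t (Finset.mem_univ i))))

lemma IsBernoulli.measure_distinctClusters_three {q : ℝ} {P : Measure (Config d)}
    (hP : IsBernoulli d q P) (hq : 0 < q) (hd : 0 < d)
    (h : P (distinctClusters d 2 Set.univ) ≠ 0) : P (distinctClusters d 3 Set.univ) = 1 := by
  have := hP.1
  have h2 : P (distinctClusters d 2 Set.univ) = 1 :=
    (hP.measure_eq_zero_or_one_of_shift_invariant hd measurableSet_distinctClusters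
      shift_preimage_distinctClusters_univ).resolve_left h
  have hmeet (R : ℕ) : P (infiniteClustersMeet d (box d R)) = 0 :=
    measure_mono_null infiniteClustersMeet_box_subset <|
      hP.measure_openBonds_preimage_eq_zero hq _ measurableSet_distinctClusters.compl
        ((prob_compl_eq_zero_iff measurableSet_distinctClusters).2 h2)
  refine (hP.measure_eq_zero_or_one_of_shift_invariant hd measurableSet_distinctClusters
    shift_preimage_distinctClusters_univ).resolve_left fun h3 => h ?_
  exact measure_mono_null (distinctClusters_subset_succ_union 2)
    (measure_union_null h3 (measure_iUnion_null hmeet))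

end DistinctClusters

section Trifurcation

variable {d R n m : ℕ} {ω : Config d}

/-- The event that the box `[-R, R]^d` is an infinite trifurcation of the open cluster. -/
def trifurcationBox (d R : ℕ) : Set (Config d) :=
  {ω | IsInfiniteTrifurcation (OpenAdj ω) (box d R : Set (V d))}

lemma measurableSet_trifurcationBox : MeasurableSet (trifurcationBox d R) :=
  measurableSet_setOfPred.2 <|
    (Measurable.forall fun _ => measurable_const.imp <| .forall fun _ => measurable_const.imp
      (measurable_connIn measurable_openAdj _ _ _)).and <|
    .exists fun _ => (Measurable.forall fun _ => measurable_const.and <|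
      (measurable_infinitelyConn measurable_openAdj _ _).and <|
        .exists fun _ => measurable_const.and (measurable_openAdj _ _)).and <|
    .forall fun _ => .forall fun _ => measurable_const.imp
      (measurable_connIn measurable_openAdj _ _ _).not

lemma distinctClusters_box_subset :
    distinctClusters d 3 (box d R) ⊆ openBonds (boxEdges d R) ⁻¹' trifurcationBox d R := by
  rintro ω ⟨t, ht, htt⟩
  choose y hyR hyinf hky hty using fun i =>
    (ht i).2.exists_branch (finite_setOf_openAdj ω) (Finset.finite_toSet _) (ht i).1
  refine ⟨fun k hk k' hk' => connIn_box (fun b hb => openBonds_of_mem hb ω) hk hk', y,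
    fun i => ⟨hyR i, ?_, ?_⟩, fun i j hij hcon => htt hij ?_⟩
  · simpa only [InfinitelyConn, connIn_openBonds_boxEdges_iff] using hyinf i
  · exact (hky i).imp fun k hk => ⟨hk.1, hk.2.openBonds _⟩
  · rw [connIn_openBonds_boxEdges_iff] at hcon
    exact ((hty i).trans (hcon.mono (Set.subset_univ _))).trans (hty j).symm

/-- The box `w + [-R, R]^d`. -/
def translatedBox (R : ℕ) (w : V d) : Set (V d) := {v | v - w ∈ box d R}

lemma isInfiniteTrifurcation_translatedBox {w : V d} (h : shift w ω ∈ trifurcationBox d R) :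
    IsInfiniteTrifurcation (OpenAdj ω) (translatedBox R w) := by
  refine .of_preimage_relIso (shiftRelIso w ω) ?_
  have hbox : shiftRelIso w ω ⁻¹' translatedBox R w = (box d R : Set (V d)) := by
    ext v
    change v + w - w ∈ box d R ↔ v ∈ box d R
    rw [add_sub_cancel_right]
  exact hbox ▸ h

lemma translatedBox_subset_box {z : V d} (hz : z ∈ box d m) :
    translatedBox R ((2 * (R : ℤ) + 1) • z) ⊆ (box d ((2 * R + 1) * m + R) : Set (V d)) := by
  intro v hv
  replace hv := mem_box.1 hv
  refine Finset.mem_coe.2 (mem_box.2 fun i => ?_)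
  have hvi := hv i
  have hzi := mem_box.1 hz i
  simp only [Pi.sub_apply, Pi.smul_apply, smul_eq_mul] at hvi
  push_cast
  constructor <;> nlinarith

lemma pairwise_disjoint_translatedBox :
    Pairwise fun z z' : V d => Disjoint (translatedBox R ((2 * (R : ℤ) + 1) • z))
      (translatedBox R ((2 * (R : ℤ) + 1) • z')) := by
  refine fun z z' hne => Set.disjoint_left.2 fun v hz hz' => hne (funext fun i => ?_)
  replace hz := mem_box.1 hz i
  replace hz' := mem_box.1 hz' i
  simp only [Pi.sub_apply, Pi.smul_apply, smul_eq_mul] at hz hz'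
  rcases lt_trichotomy (z i) (z' i) with h | h | h
  · nlinarith
  · exact h
  · nlinarith

lemma exists_isBranchPoint_boundary {K : Set (V d)} {t k : V d} (hKn : K ⊆ box d n)
    (hinf : InfinitelyConn (OpenAdj ω) Kᶜ t) (hk : k ∈ K) (hkt : OpenAdj ω k t) :
    ∃ b ∈ box d (n + 1) \ box d n, IsBranchPoint (OpenAdj ω) (box d (n + 1)) K b ∧
      ConnIn (OpenAdj ω) (box d (n + 1) \ K) t b := by
  have htn : t ∈ box d (n + 1) := hkt.mem_box_succ (hKn hk)
  obtain ⟨y, hty, hyn⟩ := hinf.exists_notMem_finset (box d (n + 1))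
  obtain ⟨b, hb, v, hv, htb, hbv⟩ := ConnIn.exists_first_hit
    (K := (box d (n + 1) : Set (V d))ᶜ) hty (fun h => h htn) hyn
  have hset : Kᶜ \ (box d (n + 1) : Set (V d))ᶜ ⊆ (box d (n + 1) : Set (V d)) \ K :=
    fun _ hu => ⟨Set.notMem_compl_iff.1 hu.2, hu.1⟩
  have hkS : k ∈ box d (n + 1) := box_mono n.le_succ (hKn hk)
  exact ⟨b, Finset.mem_sdiff.2 ⟨(hset hb).1, fun hbn => hv.2 (hbv.mem_box_succ hbn)⟩,
    ⟨hset hb, k, hk, ((htb.mono hset).mono Set.sdiff_subset).symm.trans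
      (.single htn hkS (symm_of _ hkt))⟩, htb.mono hset⟩

lemma IsInfiniteTrifurcation.isTrifurcation {K : Set (V d)}
    (h : IsInfiniteTrifurcation (OpenAdj ω) K) (hKn : K ⊆ box d n) :
    IsTrifurcation (OpenAdj ω) (box d (n + 1))
      ((box d (n + 1) \ box d n : Finset (V d)) : Set (V d)) K := by
  obtain ⟨-, t, ht, htt⟩ := h
  choose b hbB hb htb using fun i =>
    let ⟨_, hk, hkt⟩ := (ht i).2.2
    exists_isBranchPoint_boundary hKn (ht i).2.1 hk hkt
  refine ⟨b, fun i => ⟨hbB i, hb i⟩, fun i j hij hcon => htt hij ?_⟩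
  exact (((htb i).trans hcon).trans (htb j).symm).mono fun _ hv => hv.2

open Classical in
lemma card_filter_trifurcationBox_le (ω : Config d) (R m : ℕ) :
    ((box d m).filter fun z => shift ((2 * (R : ℤ) + 1) • z) ω ∈ trifurcationBox d R).card ≤
      (box d ((2 * R + 1) * m + R + 1) \ box d ((2 * R + 1) * m + R)).card := by
  set n := (2 * R + 1) * m + R
  rw [← Set.ncard_coe_finset (box d (n + 1) \ box d n)]
  have hsub (z : V d) (hz : z ∈ box d m) :
      translatedBox R ((2 * (R : ℤ) + 1) • z) ⊆ (box d n : Set (V d)) :=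
    translatedBox_subset_box hz
  refine IsTrifurcationFamily.card_le_ncard (r := OpenAdj ω) (S := box d (n + 1))
    (K := fun z => translatedBox R ((2 * (R : ℤ) + 1) • z))
    ⟨fun z hz => ?_, fun z _ z' _ => @pairwise_disjoint_translatedBox d R z z',
      fun z hz => ?_, fun z hz => ?_⟩ (Finset.finite_toSet _) (Finset.finite_toSet _)
  all_goals obtain ⟨hz, hzT⟩ := Finset.mem_filter.1 hz
  · exact (hsub z hz).trans (Finset.coe_subset.2 (box_mono n.le_succ))
  · exact (isInfiniteTrifurcation_translatedBox hzT).1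
  · exact (isInfiniteTrifurcation_translatedBox hzT).isTrifurcation (hsub z hz)

open Classical in
lemma sum_measureReal_le_of_card_filter_le {X ι : Type*} [MeasurableSpace X] {μ : Measure X}
    [IsProbabilityMeasure μ] {s : Finset ι} {A : ι → Set X} (hA : ∀ i ∈ s, MeasurableSet (A i))
    {N : ℕ} (h : ∀ x, (s.filter fun i => x ∈ A i).card ≤ N) : ∑ i ∈ s, μ.real (A i) ≤ N := by
  have hint (i : ι) (hi : i ∈ s) : Integrable ((A i).indicator (1 : X → ℝ)) μ :=
    (integrable_const 1).indicator (hA i hi)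
  calc ∑ i ∈ s, μ.real (A i) = ∫ x, ∑ i ∈ s, (A i).indicator (1 : X → ℝ) x ∂μ := by
        rw [integral_finsetSum _ hint]
        exact Finset.sum_congr rfl fun i hi => (integral_indicator_one (hA i hi)).symm
    _ ≤ ∫ _, (N : ℝ) ∂μ := by
        refine integral_mono (integrable_finsetSum _ hint) (integrable_const _) fun x => ?_
        simpa [Set.indicator_apply, Finset.sum_boole] using h x
    _ = N := by simp

lemma tendsto_card_box_sdiff_div_card_box (d R : ℕ) :
    Tendsto (fun m : ℕ =>
      ((box d ((2 * R + 1) * m + R + 1) \ box d ((2 * R + 1) * m + R)).card : ℝ) /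
        (box d m).card) atTop (𝓝 0) := by
  have hratio (m : ℕ) :
      ((box d ((2 * R + 1) * m + R + 1) \ box d ((2 * R + 1) * m + R)).card : ℝ) /
          (box d m).card =
        (2 * R + 1 + 2 / (2 * m + 1 : ℝ)) ^ d - (2 * R + 1) ^ d := by
    have hcard : (box d ((2 * R + 1) * m + R)).card ≤ (box d ((2 * R + 1) * m + R + 1)).card :=
      Finset.card_le_card (box_mono (Nat.le_succ _))
    have hm : (2 * m + 1 : ℝ) ≠ 0 := by positivity
    rw [Finset.card_sdiff_of_subset (box_mono (Nat.le_succ _)), Nat.cast_sub hcard]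
    simp only [card_box, Nat.cast_pow, sub_div, ← div_pow]
    congr 2 <;> push_cast <;> field_simp <;> ring
  have hlin : Tendsto (fun m : ℕ => (2 * m + 1 : ℝ)) atTop atTop :=
    tendsto_atTop_add_const_right _ _ (tendsto_natCast_atTop_atTop.const_mul_atTop two_pos)
  have hlim := (((hlin.const_div_atTop 2).const_add (2 * R + 1 : ℝ)).pow d).sub_const
    ((2 * R + 1 : ℝ) ^ d)
  simp_rw [hratio]
  simpa using hlim

lemma IsBernoulli.measure_trifurcationBox {q : ℝ} {P : Measure (Config d)}
    (hP : IsBernoulli d q P) (R : ℕ) : P (trifurcationBox d R) = 0 := by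
  have := hP.1
  have hbound (m : ℕ) : P.real (trifurcationBox d R) ≤
      ((box d ((2 * R + 1) * m + R + 1) \ box d ((2 * R + 1) * m + R)).card : ℝ) /
        (box d m).card := by
    have hpos : (0 : ℝ) < (box d m).card := by
      rw [card_box]
      positivity
    have hsum := sum_measureReal_le_of_card_filter_le (μ := P)
      (fun z _ => measurable_shift ((2 * (R : ℤ) + 1) • z) measurableSet_trifurcationBox)
      fun ω => card_filter_trifurcationBox_le ω R m
    simp only [measureReal_def, (hP.measurePreserving_shift _).measure_preimage
      measurableSet_trifurcationBox.nullMeasurableSet, Finset.sum_const, nsmul_eq_mul] at hsum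
    rwa [le_div_iff₀' hpos]
  have hle := ge_of_tendsto' (tendsto_card_box_sdiff_div_card_box d R) hbound
  exact (measureReal_eq_zero_iff (measure_ne_top _ _)).1 (hle.antisymm measureReal_nonneg)

end Trifurcation

section Uniqueness

variable {d : ℕ} {q : ℝ} {P : Measure (Config d)}

/- Opening all bonds of a box which meets three infinite clusters makes the box a trifurcation, and
the number of disjoint trifurcation boxes in a large box is only of the order of its boundary. -/
theorem IsBernoulli.measure_distinctClusters_two (hP : IsBernoulli d q P) (hq : 0 < q)
    (hd : 0 < d) : P (distinctClusters d 2 Set.univ) = 0 := by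
  by_contra h
  have hbox (R : ℕ) : P (distinctClusters d 3 (box d R)) = 0 :=
    measure_mono_null distinctClusters_box_subset <|
      hP.measure_openBonds_preimage_eq_zero hq _ measurableSet_trifurcationBox
        (hP.measure_trifurcationBox R)
  have hnull : P (distinctClusters d 3 Set.univ) = 0 :=
    measure_mono_null distinctClusters_univ_subset_iUnion_box (measure_iUnion_null hbox)
  exact zero_ne_one (hnull.symm.trans (hP.measure_distinctClusters_three hq hd h))

/-- The event that `τ_x ω ∈ A` for some `x` in an infinite cluster. -/
def clusterVisits (A : Set (Config d)) : Set (Config d) :=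
  {ω | ∃ x, InfinitelyConn (OpenAdj ω) Set.univ x ∧ shift x ω ∈ A}

lemma measurableSet_clusterVisits {A : Set (Config d)} (hA : MeasurableSet A) :
    MeasurableSet (clusterVisits A) :=
  measurableSet_setOfPred.2 <| .exists fun x =>
    (measurable_infinitelyConn measurable_openAdj _ _).and
      (measurableSet_setOfPred.1 (measurable_shift x hA))

lemma shift_preimage_clusterVisits (A : Set (Config d)) (w : V d) :
    shift w ⁻¹' clusterVisits A = clusterVisits A := by
  ext ω
  simp only [clusterVisits, Set.mem_preimage, Set.mem_ofPred_eq, infinitelyConn_univ_shift,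
    shift_shift]
  exact ⟨fun ⟨x, h⟩ => ⟨x + w, h⟩, fun ⟨x, h⟩ => ⟨x - w, by simpa using h⟩⟩

lemma mem_iff_shift_mem_of_connIn {A : Set (Config d)}
    (hinv : ∀ ω ∈ cluZero d, ∀ e ∈ Ud d, edgeOpen ω 0 e → (ω ∈ A ↔ shift e ω ∈ A))
    {ω : Config d} (hω : ω ∈ cluZero d) {x : V d} (hx : ConnIn (OpenAdj ω) Set.univ 0 x) :
    ω ∈ A ↔ shift x ω ∈ A := by
  unfold ConnIn at hx
  induction hx with
  | refl => rw [shift_zero]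
  | @tail u v hu huv ih =>
    have hmem : shift u ω ∈ cluZero d := by
      refine memCluster_iff.2 ((infinitelyConn_univ_shift u).2 ?_)
      rw [zero_add]
      exact (memCluster_iff.1 hω).of_connIn hu
    have hstep := hinv _ hmem (v - u) huv.2.2.1 ((edgeOpen_shift_zero_iff _ _ _).2 huv.2.2.2)
    rw [ih, hstep, shift_shift, sub_add_cancel]

theorem IsBernoulli.measure_cluZero_diff_eq_zero (hP : IsBernoulli d q P) (hq : 0 < q)
    (hd : 0 < d) {A : Set (Config d)} (hA : MeasurableSet A)
    (hinv : ∀ ω ∈ cluZero d, ∀ e ∈ Ud d, edgeOpen ω 0 e → (ω ∈ A ↔ shift e ω ∈ A))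
    (hpos : P (cluZero d ∩ A) ≠ 0) : P (cluZero d \ A) = 0 := by
  have := hP.1
  have hvisits : P (clusterVisits A) = 1 := by
    refine (hP.measure_eq_zero_or_one_of_shift_invariant hd (measurableSet_clusterVisits hA)
      (shift_preimage_clusterVisits A)).resolve_left fun h0 => hpos (measure_mono_null ?_ h0)
    exact fun ω hω => ⟨0, memCluster_iff.1 hω.1, by simpa using hω.2⟩
  have hnull : P ((clusterVisits A)ᶜ ∪ distinctClusters d 2 Set.univ) = 0 :=
    measure_union_null ((prob_compl_eq_zero_iff (measurableSet_clusterVisits hA)).2 hvisits)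
      (hP.measure_distinctClusters_two hq hd)
  refine measure_mono_null (fun ω ⟨hω, hωA⟩ => ?_) hnull
  by_contra! hcon
  obtain ⟨hvisit, huniq⟩ := not_or.1 hcon
  obtain ⟨x, hx, hxA⟩ := not_not.1 hvisit
  refine hωA ((mem_iff_shift_mem_of_connIn hinv hω ?_).2 hxA)
  by_contra h0x
  exact huniq (mem_distinctClusters_two (Set.mem_univ 0) (Set.mem_univ x)
    (memCluster_iff.1 hω) hx h0x)

end Uniqueness

/-! ### Exponential moments of the walk -/

section Srw

variable {d : ℕ} {ω : Config d}

lemma shift_mem_cluZero (hω : ω ∈ cluZero d) {e : V d} (he : e ∈ Ud d) (ho : edgeOpen ω 0 e) :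
    shift e ω ∈ cluZero d := by
  refine memCluster_iff.2 ((infinitelyConn_univ_shift e).2 ?_)
  rw [zero_add]
  exact (memCluster_iff.1 hω).of_connIn
    (.single trivial trivial ⟨by simpa using he, by simpa using ho⟩)

lemma edgeOpen_shift_neg {e : V d} (he : e ∈ Ud d) (ho : edgeOpen ω 0 e) :
    -e ∈ Ud d ∧ edgeOpen (shift e ω) 0 (-e) := by
  have h : OpenAdj ω 0 e := ⟨by simpa using he, by simpa using ho⟩
  simpa [OpenAdj, edgeOpen_shift_zero_iff] using symm_of _ h

lemma exists_edgeOpen (hω : ω ∈ cluZero d) : ∃ e ∈ Ud d, edgeOpen ω 0 e := by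
  obtain ⟨y, hy, hy0⟩ := (memCluster_iff.1 hω).exists_notMem_finset {0}
  rcases Relation.ReflTransGen.cases_head hy with h | ⟨e, he, -⟩
  · exact absurd h.symm (by simpa using hy0)
  · exact ⟨e, by simpa [OpenAdj] using he.2.2⟩

lemma openDeg_pos (hω : ω ∈ cluZero d) : 0 < openDeg ω 0 := by
  classical
  obtain ⟨e, he, ho⟩ := exists_edgeOpen hω
  exact Finset.card_pos.2 ⟨e, Finset.mem_filter.2 ⟨he, ho⟩⟩

lemma openDeg_le_card_Ud (ω : Config d) : openDeg ω 0 ≤ (Ud d).card := by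
  classical exact Finset.card_filter_le _ _

lemma srw_nonneg (ω : Config d) (e : Step d) : 0 ≤ srw d ω e := by
  unfold srw trans
  split_ifs <;> positivity

lemma srw_eq_zero {e : Step d} (ho : ¬ edgeOpen ω 0 e.1) : srw d ω e = 0 := if_neg ho

lemma inv_card_Ud_le_srw (hω : ω ∈ cluZero d) {e : Step d} (ho : edgeOpen ω 0 e.1) :
    ((Ud d).card : ℝ)⁻¹ ≤ srw d ω e := by
  have := openDeg_pos hω
  have := openDeg_le_card_Ud ω
  rw [srw, trans, if_pos ho, one_div]
  gcongr

lemma card_Ud_pos (e : Step d) : (0 : ℝ) < (Ud d).card :=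
  Nat.cast_pos.2 (Finset.card_pos.2 ⟨e.1, e.2⟩)

lemma srw_pos (hω : ω ∈ cluZero d) {e : Step d} (ho : edgeOpen ω 0 e.1) : 0 < srw d ω e :=
  (inv_pos.2 (card_Ud_pos e)).trans_le (inv_card_Ud_le_srw hω ho)

lemma sum_srw (hω : ω ∈ cluZero d) : ∑ e, srw d ω e = 1 := by
  classical
  have hdeg : (((Ud d).filter (edgeOpen ω 0)).card : ℝ) = openDeg ω 0 := by
    unfold openDeg
    congr!
  have hne : (openDeg ω 0 : ℝ) ≠ 0 := Nat.cast_ne_zero.2 (openDeg_pos hω).ne'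
  unfold srw trans
  rw [Finset.sum_coe_sort (Ud d) fun e => if edgeOpen ω 0 e then 1 / (openDeg ω 0 : ℝ) else 0,
    ← Finset.sum_filter, Finset.sum_const, nsmul_eq_mul, hdeg, mul_one_div_cancel hne]

lemma srw_mul_le_srw_mul {e : Step d} {x y : ℝ} (h : edgeOpen ω 0 e.1 → x ≤ y) :
    srw d ω e * x ≤ srw d ω e * y := by
  by_cases ho : edgeOpen ω 0 e.1
  · exact mul_le_mul_of_nonneg_left (h ho) (srw_nonneg ω e)
  · simp [srw_eq_zero ho]

lemma sum_srw_mul_mem_Icc (hω : ω ∈ cluZero d) {x : Step d → ℝ} {a b : ℝ}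
    (hx : ∀ e, edgeOpen ω 0 e.1 → x e ∈ Set.Icc a b) :
    ∑ e, srw d ω e * x e ∈ Set.Icc a b := by
  have hconst (t : ℝ) : ∑ e, srw d ω e * t = t := by rw [← Finset.sum_mul, sum_srw hω, one_mul]
  constructor
  · calc a = ∑ e, srw d ω e * a := (hconst a).symm
      _ ≤ ∑ e, srw d ω e * x e :=
        Finset.sum_le_sum fun e _ => srw_mul_le_srw_mul fun ho => (hx e ho).1
  · calc ∑ e, srw d ω e * x e ≤ ∑ e, srw d ω e * b :=
        Finset.sum_le_sum fun e _ => srw_mul_le_srw_mul fun ho => (hx e ho).2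
      _ = b := hconst b

lemma measurable_edgeOpen (e : Step d) : Measurable fun ω : Config d => edgeOpen ω 0 e.1 := by
  simpa [OpenAdj] using measurable_openAdj (d := d) 0 e.1

lemma measurable_openDeg : Measurable fun ω : Config d => (openDeg ω 0 : ℝ) := by
  classical
  have hsum : (fun ω : Config d => (openDeg ω 0 : ℝ)) =
      fun ω => ∑ e ∈ Ud d, if edgeOpen ω 0 e then (1 : ℝ) else 0 := by
    funext ω
    rw [Finset.sum_boole]
    unfold openDeg
    congr!
  exact hsum ▸ Finset.measurable_sum _ fun e he =>
    .ite (measurableSet_setOfPred.2 (measurable_edgeOpen ⟨e, he⟩)) measurable_const measurable_const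

lemma measurable_srw (e : Step d) : Measurable fun ω : Config d => srw d ω e := by
  classical
  exact .ite (measurableSet_setOfPred.2 (measurable_edgeOpen e))
    (measurable_const.div measurable_openDeg) measurable_const

end Srw

section ExpMoment

variable {d : ℕ} {κ : Config d → Step d → ℝ} {f : EnvSp d → ℝ} {n : ℕ} {ω : Config d}

lemma pos_zero (s : Fin n → Step d) : pos s 0 = 0 := by simp [pos]

lemma pos_cons (e : Step d) (s : Fin n → Step d) (k : ℕ) :
    pos (Fin.cons e s : Fin (n + 1) → Step d) (k + 1) = pos s k + e.1 := by
  unfold pos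
  rw [Finset.sum_filter, Finset.sum_filter, Fin.sum_univ_succ]
  simp [add_comm]

lemma envPair_cons_zero (e : Step d) (s : Fin n → Step d) :
    envPair ω (Fin.cons e s : Fin (n + 1) → Step d) 0 = (ω, e) := by
  simp [envPair, pos_zero]

lemma envPair_cons_succ (e : Step d) (s : Fin n → Step d) (k : Fin n) :
    envPair ω (Fin.cons e s : Fin (n + 1) → Step d) k.succ = envPair (shift e.1 ω) s k := by
  simp [envPair, pos_cons, shift_shift]

lemma pathProb_cons (e : Step d) (s : Fin n → Step d) :
    pathProb κ ω (Fin.cons e s : Fin (n + 1) → Step d) = κ ω e * pathProb κ (shift e.1 ω) s := by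
  unfold pathProb
  rw [Fin.prod_univ_succ]
  simp [pos_zero, pos_cons, shift_shift]

/-- The quenched exponential moment `E_0^{κ,ω}[exp(Σ_{k<n} f(τ_{X_k}ω, X_{k+1} - X_k))]`. -/
def expMoment (κ : Config d → Step d → ℝ) (f : EnvSp d → ℝ) (n : ℕ) (ω : Config d) : ℝ :=
  qE κ ω fun s : Fin n → Step d => Real.exp (∑ k, f (envPair ω s k))

lemma expMoment_zero (κ : Config d → Step d → ℝ) (f : EnvSp d → ℝ) (ω : Config d) :
    expMoment κ f 0 ω = 1 := by
  simp [expMoment, qE, pathProb]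

lemma expMoment_succ (κ : Config d → Step d → ℝ) (f : EnvSp d → ℝ) (n : ℕ) (ω : Config d) :
    expMoment κ f (n + 1) ω =
      ∑ e, κ ω e * (Real.exp (f (ω, e)) * expMoment κ f n (shift e.1 ω)) := by
  have hcons (e : Step d) (s : Fin n → Step d) :
      Fin.consEquiv (fun _ : Fin (n + 1) => Step d) (e, s) = Fin.cons e s := rfl
  unfold expMoment qE
  rw [← (Fin.consEquiv fun _ : Fin (n + 1) => Step d).sum_comp, Fintype.sum_prod_type]
  refine Finset.sum_congr rfl fun e _ => ?_
  simp only [Finset.mul_sum, hcons, pathProb_cons, Fin.sum_univ_succ,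
    envPair_cons_zero, envPair_cons_succ, Real.exp_add]
  exact Finset.sum_congr rfl fun s _ => by ring

lemma measurable_expMoment (hκ : ∀ e, Measurable fun ω => κ ω e) (hf : Measurable f) (n : ℕ) :
    Measurable (expMoment κ f n) := by
  induction n with
  | zero => simpa only [funext (expMoment_zero κ f)] using measurable_const
  | succ n ih =>
    rw [funext (expMoment_succ κ f n)]
    exact Finset.measurable_sum _ fun e _ => (hκ e).mul <|
      (hf.comp measurable_prodMk_right).exp.mul (ih.comp (measurable_shift e.1))

lemma expMoment_srw_mem_Icc {C : ℝ} (hC : ∀ q, |f q| ≤ C) (n : ℕ) (hω : ω ∈ cluZero d) :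
    expMoment (srw d) f n ω ∈ Set.Icc (Real.exp (-(n * C))) (Real.exp (n * C)) := by
  induction n generalizing ω with
  | zero => simp [expMoment_zero]
  | succ n ih =>
    rw [expMoment_succ]
    refine sum_srw_mul_mem_Icc hω fun e ho => ?_
    obtain ⟨hlow, hupp⟩ := ih (shift_mem_cluZero hω e.2 ho)
    obtain ⟨hflow, hfupp⟩ := abs_le.1 (hC (ω, e))
    have hsucc : ((n + 1 : ℕ) : ℝ) * C = C + n * C := by push_cast; ring
    rw [hsucc, neg_add, Real.exp_add, Real.exp_add]
    have hnonneg := (Real.exp_pos _).le.trans hlow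
    exact ⟨by gcongr, by gcongr⟩

lemma expMoment_srw_pos {C : ℝ} (hC : ∀ q, |f q| ≤ C) (n : ℕ) (hω : ω ∈ cluZero d) :
    0 < expMoment (srw d) f n ω :=
  (Real.exp_pos _).trans_le (expMoment_srw_mem_Icc hC n hω).1

end ExpMoment

section LogMgf

/- Jensen's inequality for the logarithm: this is Gibbs' variational inequality. -/
lemma sum_mul_log_div_le_log_sum {ι : Type*} [Fintype ι] {r b : ι → ℝ} (hr : ∀ i, 0 ≤ r i)
    (hr1 : ∑ i, r i = 1) (hb : ∀ i, 0 ≤ b i) (hrb : ∀ i, 0 < r i → 0 < b i) :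
    ∑ i, r i * Real.log (b i / r i) ≤ Real.log (∑ i, b i) := by
  classical
  set t := Finset.univ.filter fun i => 0 < r i
  have hzero (i : ι) (hi : i ∉ t) : r i = 0 := by
    simpa [t, (hr i).lt_iff_ne', eq_comm] using hi
  have ht1 : ∑ i ∈ t, r i = 1 := by
    rw [← hr1]
    exact Finset.sum_subset t.subset_univ fun i _ hi => hzero i hi
  have hpos (i : ι) (hi : i ∈ t) : 0 < r i := (Finset.mem_filter.1 hi).2
  have htne : t.Nonempty := Finset.nonempty_of_sum_ne_zero (ht1 ▸ one_ne_zero)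
  calc ∑ i, r i * Real.log (b i / r i)
      = ∑ i ∈ t, r i * Real.log (b i / r i) :=
        (Finset.sum_subset t.subset_univ fun i _ hi => by rw [hzero i hi, zero_mul]).symm
    _ ≤ Real.log (∑ i ∈ t, r i * (b i / r i)) :=
        strictConcaveOn_log_Ioi.concaveOn.le_map_sum (fun i _ => hr i) ht1
          fun i hi => div_pos (hrb i (hpos i hi)) (hpos i hi)
    _ = Real.log (∑ i ∈ t, b i) := by
        rw [Finset.sum_congr rfl fun i hi => mul_div_cancel₀ _ (hpos i hi).ne']
    _ ≤ Real.log (∑ i, b i) :=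
        Real.log_le_log (Finset.sum_pos (fun i hi => hrb i (hpos i hi)) htne)
          (Finset.sum_le_sum_of_subset_of_nonneg t.subset_univ fun i _ _ => hb i)

variable {d : ℕ} {f : EnvSp d → ℝ} {C : ℝ} {ω : Config d}

/-- The logarithmic moment generating function of the simple random walk on the cluster. -/
def logMgf (f : EnvSp d → ℝ) (n : ℕ) (ω : Config d) : ℝ := Real.log (expMoment (srw d) f n ω)

lemma logMgf_zero (f : EnvSp d → ℝ) (ω : Config d) : logMgf f 0 ω = 0 := by
  rw [logMgf, expMoment_zero, Real.log_one]

lemma measurable_logMgf (hf : Measurable f) (n : ℕ) : Measurable (logMgf f n) :=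
  (measurable_expMoment measurable_srw hf n).log

lemma abs_logMgf_le (hC : ∀ q, |f q| ≤ C) (n : ℕ) (hω : ω ∈ cluZero d) :
    |logMgf f n ω| ≤ n * C := by
  have hpos := expMoment_srw_pos hC n hω
  obtain ⟨hlow, hupp⟩ := expMoment_srw_mem_Icc hC n hω
  exact abs_le.2 ⟨(Real.le_log_iff_exp_le hpos).2 hlow, (Real.log_le_iff_le_exp hpos).2 hupp⟩

lemma sum_mul_add_logMgf_le (hC : ∀ q, |f q| ≤ C) (n : ℕ) (hω : ω ∈ cluZero d)
    {r : Step d → ℝ} (hr : ∀ e, 0 ≤ r e) (hr1 : ∑ e, r e = 1)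
    (hro : ∀ e, 0 < r e → edgeOpen ω 0 e.1) :
    ∑ e, r e * (f (ω, e) - Real.log (r e / srw d ω e) + logMgf f n (shift e.1 ω)) ≤
      logMgf f (n + 1) ω := by
  have hmom {e : Step d} (ho : edgeOpen ω 0 e.1) : 0 < expMoment (srw d) f n (shift e.1 ω) :=
    expMoment_srw_pos hC n (shift_mem_cluZero hω e.2 ho)
  have hterm (e : Step d) (ho : edgeOpen ω 0 e.1) :
      0 < srw d ω e * (Real.exp (f (ω, e)) * expMoment (srw d) f n (shift e.1 ω)) :=
    mul_pos (srw_pos hω ho) (mul_pos (Real.exp_pos _) (hmom ho))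
  have hgibbs := sum_mul_log_div_le_log_sum hr hr1
    (fun e => by simpa using srw_mul_le_srw_mul fun ho =>
      (mul_pos (Real.exp_pos (f (ω, e))) (hmom ho)).le)
    fun e he => hterm e (hro e he)
  rw [← expMoment_succ] at hgibbs
  refine le_of_eq_of_le (Finset.sum_congr rfl fun e _ => ?_) hgibbs
  rcases (hr e).eq_or_lt with he | he
  · rw [← he, zero_mul, zero_mul]
  · have hsrw := srw_pos hω (hro e he)
    rw [Real.log_div (hterm e (hro e he)).ne' he.ne', Real.log_div he.ne' hsrw.ne',
      Real.log_mul hsrw.ne' (mul_pos (Real.exp_pos _) (hmom (hro e he))).ne',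
      Real.log_mul (Real.exp_pos _).ne' (hmom (hro e he)).ne', Real.log_exp, logMgf]
    ring

lemma logMgf_shift_sub_le (hC : ∀ q, |f q| ≤ C) (n : ℕ) (hω : ω ∈ cluZero d) {e : Step d}
    (ho : edgeOpen ω 0 e.1) :
    logMgf f n (shift e.1 ω) - (C + Real.log (Ud d).card) ≤ logMgf f (n + 1) ω := by
  classical
  have hnonneg : 0 ≤ (Pi.single e 1 : Step d → ℝ) := Pi.single_nonneg.2 zero_le_one
  have hstep := sum_mul_add_logMgf_le hC n hω (r := Pi.single e 1)
    (fun e' => hnonneg e') (by simp)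
    fun e' he' => by
      obtain rfl : e' = e := by_contra fun hne => he'.ne' (Pi.single_eq_of_ne hne 1)
      exact ho
  rw [Finset.sum_eq_single_of_mem e (Finset.mem_univ e)
    fun e' _ hne => by rw [Pi.single_eq_of_ne hne, zero_mul], Pi.single_eq_same, one_mul,
    one_div, Real.log_inv] at hstep
  have hsrw := Real.log_le_log (inv_pos.2 (card_Ud_pos e)) (inv_card_Ud_le_srw hω ho)
  rw [Real.log_inv] at hsrw
  have hf := (abs_le.1 (hC (ω, e))).1
  linarith

end LogMgf

/-! ### Hopf's maximal inequality -/

section MaximalInequality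

variable {X : Type*} {T : (X → ℝ) → X → ℝ} {h : ℕ → X → ℝ} {φ : X → ℝ}

lemma partialSups_le_indicator_add (hT : Monotone T) (hT0 : 0 ≤ T 0) (h0 : h 0 = 0) {x : X}
    (hstep : ∀ n, h (n + 1) x ≤ φ x + T (h n) x) (N : ℕ) :
    partialSups h N x ≤
      {x | 0 < partialSups h N x}.indicator φ x + T (partialSups h N) x := by
  by_cases hx : 0 < partialSups h N x
  · rw [Set.indicator_of_mem (show x ∈ {x | 0 < partialSups h N x} from hx)]
    obtain ⟨n, hnN, hn⟩ := exists_partialSups_eq (fun n => h n x) N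
    rw [← Pi.partialSups_apply] at hn
    cases n with
    | zero => rw [hn, h0] at hx; exact absurd hx (lt_irrefl 0)
    | succ n =>
      calc partialSups h N x = h (n + 1) x := hn
        _ ≤ φ x + T (h n) x := hstep n
        _ ≤ φ x + T (partialSups h N) x := by
          gcongr
          exact hT (le_partialSups_of_le h (Nat.le_of_succ_le hnN)) x
  · rw [Set.indicator_of_notMem (show x ∉ {x | 0 < partialSups h N x} from hx), zero_add]
    exact (not_lt.1 hx).trans
      ((hT0 x).trans (hT (h0 ▸ le_partialSups_of_le h N.zero_le) x))

variable [MeasurableSpace X] {Q : Measure X}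

lemma measurable_partialSups (hm : ∀ n, Measurable (h n)) (N : ℕ) :
    Measurable (partialSups h N) := by
  induction N with
  | zero => simpa using hm 0
  | succ N ih => simpa only [partialSups_add_one] using ih.sup (hm (N + 1))

lemma integrable_partialSups (hi : ∀ n, Integrable (h n) Q) (N : ℕ) :
    Integrable (partialSups h N) Q := by
  induction N with
  | zero => simpa using hi 0
  | succ N ih => simpa only [partialSups_add_one] using ih.sup (hi (N + 1))

theorem setIntegral_partialSups_pos_nonneg (hT : Monotone T) (hT0 : 0 ≤ T 0)
    (hTint : ∀ F, Measurable F → Integrable F Q → Integrable (T F) Q ∧ ∫ x, T F x ∂Q = ∫ x, F x ∂Q)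
    (hm : ∀ n, Measurable (h n)) (hi : ∀ n, Integrable (h n) Q) (hφ : Integrable φ Q)
    (h0 : h 0 = 0) (hstep : ∀ n, ∀ᵐ x ∂Q, h (n + 1) x ≤ φ x + T (h n) x) (N : ℕ) :
    0 ≤ ∫ x in {x | 0 < partialSups h N x}, φ x ∂Q := by
  set M := partialSups h N
  set S := {x | 0 < M x}
  have hMi : Integrable M Q := integrable_partialSups hi N
  have hS : MeasurableSet S := measurableSet_lt measurable_const (measurable_partialSups hm N)
  obtain ⟨hTi, hTM⟩ := hTint M (measurable_partialSups hm N) hMi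
  have hφS : Integrable (S.indicator φ) Q := hφ.indicator hS
  have hle : ∫ x, M x ∂Q ≤ ∫ x in S, φ x ∂Q + ∫ x, M x ∂Q :=
    calc ∫ x, M x ∂Q ≤ ∫ x, (S.indicator φ x + T M x) ∂Q := by
          refine integral_mono_ae hMi (hφS.add hTi) ?_
          filter_upwards [ae_all_iff.2 hstep] with x hx
          exact partialSups_le_indicator_add hT hT0 h0 hx N
      _ = ∫ x in S, φ x ∂Q + ∫ x, M x ∂Q := by
          rw [integral_add hφS hTi, integral_indicator hS, hTM]
  linarith

theorem integral_nonneg_of_ae_exists_pos (hT : Monotone T) (hT0 : 0 ≤ T 0)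
    (hTint : ∀ F, Measurable F → Integrable F Q → Integrable (T F) Q ∧ ∫ x, T F x ∂Q = ∫ x, F x ∂Q)
    (hm : ∀ n, Measurable (h n)) (hi : ∀ n, Integrable (h n) Q) (hφ : Integrable φ Q)
    (h0 : h 0 = 0) (hstep : ∀ n, ∀ᵐ x ∂Q, h (n + 1) x ≤ φ x + T (h n) x)
    (hpos : ∀ᵐ x ∂Q, ∃ n, 0 < h n x) : 0 ≤ ∫ x, φ x ∂Q := by
  set S : ℕ → Set X := fun N => {x | 0 < partialSups h N x}
  have hS (N : ℕ) : MeasurableSet (S N) :=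
    measurableSet_lt measurable_const (measurable_partialSups hm N)
  have hmono : Monotone S := fun a b hab x hx => lt_of_lt_of_le hx ((partialSups h).mono hab x)
  have hunion : (⋃ N, S N) =ᵐ[Q] Set.univ := by
    rw [eventuallyEq_univ]
    filter_upwards [hpos] with x ⟨n, hn⟩
    exact Set.mem_iUnion.2 ⟨n, hn.trans_le (le_partialSups h n x)⟩
  have hlim := tendsto_setIntegral_of_monotone hS hmono (hφ.integrableOn (s := ⋃ N, S N))
  rw [setIntegral_congr_set hunion, setIntegral_univ] at hlim
  exact ge_of_tendsto' hlim
    (setIntegral_partialSups_pos_nonneg hT hT0 hTint hm hi hφ h0 hstep)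

end MaximalInequality

/-! ### Measures on a product with a countable factor -/

section OfSlices

variable {X ι : Type*} [MeasurableSpace X] [MeasurableSpace ι]
  {Q : Measure X} {ρ σ : ι → X → ℝ≥0∞}

/-- The measure `dμ(x, i) = ρ_i(x) dQ(x)` on `X × ι`: both `μ` and the reference measure of its
entropy are of this form, with `Q = (μ)_1`. -/
def ofSlices (Q : Measure X) (ρ : ι → X → ℝ≥0∞) : Measure (X × ι) :=
  Measure.sum fun i => (Q.withDensity (ρ i)).map fun x => (x, i)

lemma integral_ofSlices [Fintype ι] (hρ : ∀ i, Measurable (ρ i)) (hfin : ∀ i, ∀ᵐ x ∂Q, ρ i x < ∞)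
    {F : X × ι → ℝ} (hF : Measurable F) (hFi : Integrable F (ofSlices Q ρ)) :
    Integrable (fun x => ∑ i, (ρ i x).toReal * F (x, i)) Q ∧
      ∫ x, ∑ i, (ρ i x).toReal * F (x, i) ∂Q = ∫ q, F q ∂ofSlices Q ρ := by
  have hFslice (i : ι) : Integrable F ((Q.withDensity (ρ i)).map fun x => (x, i)) :=
    hFi.mono_measure (Measure.le_sum _ i)
  have hint (i : ι) : Integrable (fun x => (ρ i x).toReal * F (x, i)) Q :=
    (integrable_withDensity_iff_integrable_smul' (hρ i) (hfin i)).1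
      ((hFslice i).comp_measurable measurable_prodMk_right)
  refine ⟨integrable_finsetSum _ fun i _ => hint i, ?_⟩
  rw [integral_finsetSum _ fun i _ => hint i, ofSlices, Measure.sum_fintype,
    integral_finsetSum_measure fun i _ => hFslice i]
  refine Finset.sum_congr rfl fun i _ => ?_
  rw [integral_map measurable_prodMk_right.aemeasurable hF.aestronglyMeasurable,
    integral_withDensity_eq_integral_toReal_smul (hρ i) (hfin i)]
  rfl

variable [Countable ι]

lemma lintegral_ofSlices (hρ : ∀ i, Measurable (ρ i)) {F : X × ι → ℝ≥0∞} (hF : Measurable F) :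
    ∫⁻ q, F q ∂ofSlices Q ρ = ∫⁻ x, ∑' i, ρ i x * F (x, i) ∂Q := by
  have hFi (i : ι) : Measurable fun x => F (x, i) := hF.comp measurable_prodMk_right
  rw [ofSlices, lintegral_sum_measure,
    lintegral_tsum (f := fun i x => ρ i x * F (x, i))
      fun i => ((hρ i).mul (hFi i)).aemeasurable]
  refine tsum_congr fun i => ?_
  rw [lintegral_map hF measurable_prodMk_right]
  exact lintegral_withDensity_eq_lintegral_mul _ (hρ i) (hFi i)

lemma ofSlices_apply (hρ : ∀ i, Measurable (ρ i)) {A : Set (X × ι)} (hA : MeasurableSet A) :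
    ofSlices Q ρ A = ∫⁻ x, ∑' i, ρ i x * A.indicator 1 (x, i) ∂Q := by
  rw [← lintegral_indicator_one hA, lintegral_ofSlices hρ (measurable_one.indicator hA)]

lemma map_fst_ofSlices (hρ : ∀ i, Measurable (ρ i)) :
    (ofSlices Q ρ).map Prod.fst = Q.withDensity fun x => ∑' i, ρ i x := by
  ext A hA
  rw [Measure.map_apply measurable_fst hA, ofSlices_apply hρ (measurable_fst hA),
    withDensity_apply _ hA, ← lintegral_indicator hA]
  refine lintegral_congr fun x => ?_
  by_cases hx : x ∈ A <;> simp [hx]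

variable [MeasurableSingletonClass ι]

lemma measurable_div_slices (hρ : ∀ i, Measurable (ρ i)) (hσ : ∀ i, Measurable (σ i)) :
    Measurable fun q : X × ι => ρ q.2 q.1 / σ q.2 q.1 :=
  measurable_from_prod_countable_left fun i => (hρ i).div (hσ i)

lemma ofSlices_eq_withDensity_div (hρ : ∀ i, Measurable (ρ i)) (hσ : ∀ i, Measurable (σ i))
    (hσtop : ∀ i x, σ i x ≠ ∞) (hρσ : ∀ᵐ x ∂Q, ∀ i, σ i x = 0 → ρ i x = 0) :
    ofSlices Q ρ = (ofSlices Q σ).withDensity fun q => ρ q.2 q.1 / σ q.2 q.1 := by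
  ext A hA
  rw [ofSlices_apply hρ hA, withDensity_apply _ hA, ← lintegral_indicator hA,
    lintegral_ofSlices hσ ((measurable_div_slices hρ hσ).indicator hA)]
  refine lintegral_congr_ae ?_
  filter_upwards [hρσ] with x hx
  refine tsum_congr fun i => ?_
  by_cases hi : (x, i) ∈ A
  · simp [hi, ENNReal.mul_div_cancel' (hx i) fun h => absurd h (hσtop i x)]
  · simp [hi]

lemma llr_ofSlices [SigmaFinite (ofSlices Q σ)] (hρ : ∀ i, Measurable (ρ i))
    (hσ : ∀ i, Measurable (σ i)) (hσtop : ∀ i x, σ i x ≠ ∞)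
    (hρσ : ∀ᵐ x ∂Q, ∀ i, σ i x = 0 → ρ i x = 0) :
    llr (ofSlices Q ρ) (ofSlices Q σ) =ᵐ[ofSlices Q ρ]
      fun q => Real.log ((ρ q.2 q.1).toReal / (σ q.2 q.1).toReal) := by
  have hdens := ofSlices_eq_withDensity_div hρ hσ hσtop hρσ
  have hac : ofSlices Q ρ ≪ ofSlices Q σ := hdens ▸ withDensity_absolutelyContinuous _ _
  have hrn := Measure.rnDeriv_withDensity (ofSlices Q σ) (measurable_div_slices hρ hσ)
  rw [← hdens] at hrn
  filter_upwards [hac.ae_le hrn] with q hq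
  simp only [llr_def, hq, ENNReal.toReal_div]

end OfSlices

/-! ### Disintegration of the measures in `M1star` -/

section Disintegration

variable {d : ℕ} {μ : Measure (EnvSp d)}

lemma sum_map_slice (μ : Measure (EnvSp d)) :
    Measure.sum (fun e => (slice μ e).map fun ω => (ω, e)) = μ := by
  have hslice (e : Step d) :
      (slice μ e).map (fun ω => (ω, e)) = μ.restrict (Set.univ ×ˢ {e}) := by
    have hid : (fun q : EnvSp d => (q.1, e)) =ᵐ[μ.restrict (Set.univ ×ˢ {e})] id :=
      ae_restrict_of_forall_mem (MeasurableSet.univ.prod (measurableSet_singleton e))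
        fun q hq => Prod.ext rfl (Set.mem_singleton_iff.1 hq.2).symm
    rw [slice, Measure.map_map measurable_prodMk_right measurable_fst]
    exact (Measure.map_congr hid).trans Measure.map_id
  have hunion : ⋃ e : Step d, (Set.univ : Set (Config d)) ×ˢ {e} = Set.univ := by
    ext q; simp
  simp_rw [hslice]
  rw [← Measure.restrict_iUnion ?_ fun e => MeasurableSet.univ.prod (measurableSet_singleton e),
    hunion, Measure.restrict_univ]
  exact fun e e' hne => Set.disjoint_prod.2 (.inr (Set.disjoint_singleton.2 hne))

lemma slice_absolutelyContinuous_marg1 (μ : Measure (EnvSp d)) (e : Step d) :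
    slice μ e ≪ marg1 μ :=
  (Measure.map_mono Measure.restrict_le_self measurable_fst).absolutelyContinuous

/-- The `ℝ≥0∞`-valued version of `toKappa`. -/
def stepDensity (μ : Measure (EnvSp d)) (e : Step d) : Config d → ℝ≥0∞ :=
  (slice μ e).rnDeriv (marg1 μ)

lemma measurable_stepDensity (μ : Measure (EnvSp d)) (e : Step d) : Measurable (stepDensity μ e) :=
  Measure.measurable_rnDeriv _ _

instance isFiniteMeasure_marg1 [IsFiniteMeasure μ] : IsFiniteMeasure (marg1 μ) :=
  Measure.isFiniteMeasure_map _ _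

instance isFiniteMeasure_slice [IsFiniteMeasure μ] (e : Step d) : IsFiniteMeasure (slice μ e) :=
  Measure.isFiniteMeasure_map _ _

lemma withDensity_stepDensity (μ : Measure (EnvSp d)) [IsFiniteMeasure μ] (e : Step d) :
    (marg1 μ).withDensity (stepDensity μ e) = slice μ e :=
  have : SigmaFinite (marg1 μ) := inferInstance
  Measure.withDensity_rnDeriv_eq _ _ (slice_absolutelyContinuous_marg1 μ e)

lemma ofSlices_stepDensity (μ : Measure (EnvSp d)) [IsFiniteMeasure μ] :
    ofSlices (marg1 μ) (stepDensity μ) = μ := by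
  simp_rw [ofSlices, withDensity_stepDensity, sum_map_slice]

lemma toKappa_nonneg (μ : Measure (EnvSp d)) (ω : Config d) (e : Step d) : 0 ≤ toKappa μ ω e :=
  ENNReal.toReal_nonneg

lemma measurable_toKappa (μ : Measure (EnvSp d)) (e : Step d) :
    Measurable fun ω => toKappa μ ω e :=
  (measurable_stepDensity μ e).ennreal_toReal

lemma stepDensity_lt_top [IsFiniteMeasure μ] (e : Step d) :
    ∀ᵐ ω ∂marg1 μ, stepDensity μ e ω < ∞ :=
  Measure.rnDeriv_lt_top _ _

lemma ae_sum_toKappa [IsFiniteMeasure μ] : ∀ᵐ ω ∂marg1 μ, ∑ e, toKappa μ ω e = 1 := by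
  have hmap := map_fst_ofSlices (Q := marg1 μ) (measurable_stepDensity μ)
  simp only [ofSlices_stepDensity, tsum_fintype] at hmap
  have hone : (1 : Config d → ℝ≥0∞) =ᵐ[marg1 μ] fun ω => ∑ e, stepDensity μ e ω := by
    refine (withDensity_eq_iff aemeasurable_one
      (Finset.measurable_sum _ fun e _ => measurable_stepDensity μ e).aemeasurable ?_).1
      (withDensity_one.trans hmap)
    simp
  filter_upwards [hone, ae_all_iff.2 (stepDensity_lt_top (μ := μ))] with ω hω hfin
  have hsum := ENNReal.toReal_sum fun e (_ : e ∈ Finset.univ) => (hfin e).ne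
  rw [← hω, Pi.one_apply, ENNReal.toReal_one] at hsum
  exact hsum.symm

lemma integral_sum_toKappa_mul [IsFiniteMeasure μ] {F : EnvSp d → ℝ} (hF : Measurable F)
    (hFi : Integrable F μ) :
    Integrable (fun ω => ∑ e, toKappa μ ω e * F (ω, e)) (marg1 μ) ∧
      ∫ ω, ∑ e, toKappa μ ω e * F (ω, e) ∂marg1 μ = ∫ q, F q ∂μ := by
  have hFi' : Integrable F (ofSlices (marg1 μ) (stepDensity μ)) := by rwa [ofSlices_stepDensity]
  have h := integral_ofSlices (measurable_stepDensity μ) stepDensity_lt_top hF hFi'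
  rwa [ofSlices_stepDensity] at h

lemma measurable_shift_step : Measurable fun q : EnvSp d => shift q.2.1 q.1 :=
  measurable_from_prod_countable_left fun e => measurable_shift e.1

lemma integral_kernelStep_toKappa [IsFiniteMeasure μ] (hinv : marg1 μ = marg2 μ)
    (F : Config d → ℝ) (hF : Measurable F) (hFi : Integrable F (marg1 μ)) :
    Integrable (kernelStep (toKappa μ) F) (marg1 μ) ∧
      ∫ ω, kernelStep (toKappa μ) F ω ∂marg1 μ = ∫ ω, F ω ∂marg1 μ := by
  have hFshift : Integrable (fun q : EnvSp d => F (shift q.2.1 q.1)) μ :=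
    (hinv ▸ hFi : Integrable F (marg2 μ)).comp_measurable measurable_shift_step
  obtain ⟨hint, heq⟩ := integral_sum_toKappa_mul (hF.comp measurable_shift_step) hFshift
  refine ⟨hint, heq.trans ?_⟩
  rw [hinv, marg2, integral_map measurable_shift_step.aemeasurable hF.aestronglyMeasurable]
  rfl

lemma monotone_kernelStep {κ : Config d → Step d → ℝ} (hκ : ∀ ω e, 0 ≤ κ ω e) :
    Monotone (kernelStep κ) := fun _ _ hFG ω =>
  Finset.sum_le_sum fun e _ => mul_le_mul_of_nonneg_left (hFG (shift e.1 ω)) (hκ ω e)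

lemma kernelStep_zero (κ : Config d → Step d → ℝ) : kernelStep κ 0 = 0 := by
  funext ω
  simp [kernelStep]

end Disintegration

/-! ### The entropy of a measure in `M1star` -/

section Entropy

variable {d : ℕ} {P₀ : Measure (Config d)} {μ : ProbabilityMeasure (EnvSp d)} {f : EnvSp d → ℝ}

lemma ae_toKappa_pos_iff (hμ : μ ∈ M1star d P₀) :
    ∀ᵐ ω ∂marg1 μ.toMeasure, ∀ e, 0 < toKappa μ.toMeasure ω e ↔ edgeOpen ω 0 e.1 := by
  obtain ⟨-, hac, ρ, hρ, hslice, hpos⟩ := hμ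
  refine ae_all_iff.2 fun e => ?_
  have hdens : stepDensity μ.toMeasure e =ᵐ[marg1 μ.toMeasure] ρ e := by
    have : SigmaFinite (marg1 μ.toMeasure) := inferInstance
    rw [stepDensity, hslice e]
    exact Measure.rnDeriv_withDensity _ (hρ e)
  filter_upwards [hdens, stepDensity_lt_top e, hac.ae_le (hpos e)] with ω hω hfin hiff
  rw [← hiff, ← hω]
  exact ENNReal.toReal_pos_iff.trans (and_iff_left hfin)

lemma isProbabilityMeasure_refM (hclu : ∀ᵐ ω ∂marg1 μ.toMeasure, ω ∈ cluZero d) :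
    IsProbabilityMeasure (refM μ.toMeasure) := by
  have hmass : ∀ᵐ ω ∂marg1 μ.toMeasure,
      ∑' e, ENNReal.ofReal (srw d ω e) * Set.univ.indicator 1 (ω, e) = 1 := by
    filter_upwards [hclu] with ω hω
    simp only [Set.indicator_univ, Pi.one_apply, mul_one, tsum_fintype]
    rw [← ENNReal.ofReal_sum_of_nonneg fun e _ => srw_nonneg ω e, sum_srw hω, ENNReal.ofReal_one]
  constructor
  change ofSlices (marg1 μ.toMeasure) (fun e ω => ENNReal.ofReal (srw d ω e)) Set.univ = 1
  rw [ofSlices_apply (fun e => (measurable_srw e).ennreal_ofReal) .univ, lintegral_congr_ae hmass,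
    lintegral_one, marg1, Measure.map_apply measurable_fst .univ, Set.preimage_univ, measure_univ]

lemma llr_refM (hμ : μ ∈ M1star d P₀) (hclu : ∀ᵐ ω ∂marg1 μ.toMeasure, ω ∈ cluZero d) :
    llr μ.toMeasure (refM μ.toMeasure) =ᵐ[μ.toMeasure]
      fun q => Real.log (toKappa μ.toMeasure q.1 q.2 / srw d q.1 q.2) := by
  have : IsProbabilityMeasure (ofSlices (marg1 μ.toMeasure)
    fun e ω => ENNReal.ofReal (srw d ω e)) := isProbabilityMeasure_refM hclu
  have hzero : ∀ᵐ ω ∂marg1 μ.toMeasure, ∀ e,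
      ENNReal.ofReal (srw d ω e) = 0 → stepDensity μ.toMeasure e ω = 0 := by
    filter_upwards [ae_toKappa_pos_iff hμ, hclu,
      ae_all_iff.2 (stepDensity_lt_top (μ := μ.toMeasure))] with ω hω hmem hfin e he
    by_contra hne
    have ho := (hω e).1 (ENNReal.toReal_pos hne (hfin e).ne)
    exact (ENNReal.ofReal_pos.2 (srw_pos hmem ho)).ne' he
  have hllr := llr_ofSlices (measurable_stepDensity μ.toMeasure)
    (fun e => (measurable_srw e).ennreal_ofReal) (fun _ _ => ENNReal.ofReal_ne_top) hzero
  simp only [ofSlices_stepDensity, ENNReal.toReal_ofReal (srw_nonneg _ _)] at hllr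
  exact hllr

lemma entI_eq_klDiv (hμ : μ ∈ M1star d P₀) (hclu : ∀ᵐ ω ∂marg1 μ.toMeasure, ω ∈ cluZero d) :
    entI P₀ μ = InformationTheory.klDiv μ.toMeasure (refM μ.toMeasure) := by
  have := isProbabilityMeasure_refM hclu
  have hkl (x : ℝ) : klFun x = InformationTheory.klFun x := by
    rw [klFun, InformationTheory.klFun]
    ring
  by_cases hac : μ.toMeasure ≪ refM μ.toMeasure
  · rw [entI, if_pos ⟨hμ, hac⟩, InformationTheory.klDiv_eq_lintegral_klFun_of_ac hac]
    simp_rw [hkl]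
  · rw [entI, if_neg fun h => hac h.2, InformationTheory.klDiv_of_not_ac hac]

/-- The integrand of `⟨f,μ⟩ - ℑ(μ)` with respect to `(μ)_1`. -/
def entropicGain (f : EnvSp d → ℝ) (μ : Measure (EnvSp d)) (ω : Config d) : ℝ :=
  ∑ e, toKappa μ ω e * (f (ω, e) - Real.log (toKappa μ ω e / srw d ω e))

theorem integral_entropicGain (hμ : μ ∈ M1star d P₀)
    (hclu : ∀ᵐ ω ∂marg1 μ.toMeasure, ω ∈ cluZero d) (hent : entI P₀ μ ≠ ∞)
    (hf : Measurable f) (hfi : Integrable f μ.toMeasure) :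
    Integrable (entropicGain f μ.toMeasure) (marg1 μ.toMeasure) ∧
      ∫ ω, entropicGain f μ.toMeasure ω ∂marg1 μ.toMeasure =
        pairing f μ - (entI P₀ μ).toReal := by
  have := isProbabilityMeasure_refM hclu
  rw [entI_eq_klDiv hμ hclu] at hent ⊢
  obtain ⟨hac, hllr⟩ := InformationTheory.klDiv_ne_top_iff.1 hent
  have hlog := llr_refM hμ hclu
  have hlogi := (integrable_congr hlog).1 hllr
  have hlogm : Measurable fun q : EnvSp d =>
      Real.log (toKappa μ.toMeasure q.1 q.2 / srw d q.1 q.2) :=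
    measurable_from_prod_countable_left fun e =>
      ((measurable_toKappa _ e).div (measurable_srw e)).log
  obtain ⟨hint, heq⟩ := integral_sum_toKappa_mul (hf.sub hlogm) (hfi.sub hlogi)
  refine ⟨hint, heq.trans ?_⟩
  rw [InformationTheory.toReal_klDiv_of_measure_eq hac (by simp), integral_congr_ae hlog]
  exact integral_sub hfi hlogi

end Entropy

/-! ### The lower bound -/

section LowerBound

variable {d : ℕ} {f : EnvSp d → ℝ} {C : ℝ}

/-- The configurations for which the logarithmic moment generating function grows at least at
linear rate `c`. The additive constant makes the event invariant under open steps. -/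
def linearGrowth (f : EnvSp d → ℝ) (c : ℝ) : Set (Config d) :=
  {ω | ∃ K : ℕ, ∀ n : ℕ, c * n - K ≤ logMgf f n ω}

lemma measurableSet_linearGrowth (hf : Measurable f) (c : ℝ) :
    MeasurableSet (linearGrowth f c) := by
  simp only [linearGrowth, Set.ofPred_exists, Set.ofPred_forall]
  exact .iUnion fun _ => .iInter fun n => measurableSet_le measurable_const (measurable_logMgf hf n)

lemma mem_linearGrowth_of_shift (hC : ∀ q, |f q| ≤ C) {c : ℝ} {ω : Config d}
    (hω : ω ∈ cluZero d) {e : V d} (he : e ∈ Ud d) (ho : edgeOpen ω 0 e)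
    (h : shift e ω ∈ linearGrowth f c) : ω ∈ linearGrowth f c := by
  obtain ⟨K, hK⟩ := h
  obtain ⟨K', hK'⟩ := exists_nat_ge (K + (C + Real.log (Ud d).card) + c)
  refine ⟨K', fun n => ?_⟩
  cases n with
  | zero => simp [logMgf_zero]
  | succ n =>
    calc c * (n + 1 : ℕ) - K' ≤ c * n - K - (C + Real.log (Ud d).card) := by push_cast; linarith
      _ ≤ logMgf f n (shift e ω) - (C + Real.log (Ud d).card) := by gcongr; exact hK n
      _ ≤ logMgf f (n + 1) ω := logMgf_shift_sub_le (e := ⟨e, he⟩) hC n hω ho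

lemma mem_linearGrowth_iff_shift (hC : ∀ q, |f q| ≤ C) {c : ℝ} {ω : Config d}
    (hω : ω ∈ cluZero d) {e : V d} (he : e ∈ Ud d) (ho : edgeOpen ω 0 e) :
    ω ∈ linearGrowth f c ↔ shift e ω ∈ linearGrowth f c := by
  refine ⟨fun h => ?_, mem_linearGrowth_of_shift hC hω he ho⟩
  obtain ⟨hneg, hoNeg⟩ := edgeOpen_shift_neg he ho
  refine mem_linearGrowth_of_shift hC (shift_mem_cluZero hω he ho) hneg hoNeg ?_
  rwa [shift_shift, neg_add_cancel, shift_zero]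

lemma le_liminf_of_mem_linearGrowth (hC : ∀ q, |f q| ≤ C) {c : ℝ} {ω : Config d}
    (hω : ω ∈ cluZero d) (h : ω ∈ linearGrowth f c) :
    (c : EReal) ≤ liminf (fun n : ℕ => ((n : ℝ)⁻¹ : EReal) *
      ENNReal.log (ENNReal.ofReal (expMoment (srw d) f n ω))) atTop := by
  obtain ⟨K, hK⟩ := h
  have hlim : Tendsto (fun n : ℕ => ((c - K / n : ℝ) : EReal)) atTop (𝓝 c) := by
    refine EReal.tendsto_coe.2 ?_
    simpa using tendsto_const_nhds.sub (tendsto_const_div_atTop_nhds_zero_nat (K : ℝ))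
  rw [← hlim.liminf_eq]
  refine liminf_le_liminf ?_
  filter_upwards [eventually_gt_atTop 0] with n hn
  have : (0 : ℝ) < n := Nat.cast_pos.2 hn
  rw [ENNReal.log_ofReal_of_pos (expMoment_srw_pos hC n hω), ← EReal.coe_inv, ← EReal.coe_mul,
    EReal.coe_le_coe_iff]
  calc c - K / n = (n : ℝ)⁻¹ * (c * n - K) := by field_simp
    _ ≤ (n : ℝ)⁻¹ * logMgf f n ω := by gcongr; exact hK n

theorem le_integral_entropicGain {P₀ : Measure (Config d)} {μ : ProbabilityMeasure (EnvSp d)}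
    (hμ : μ ∈ M1star d P₀) (hclu : ∀ᵐ ω ∂marg1 μ.toMeasure, ω ∈ cluZero d)
    (hgain : Integrable (entropicGain f μ.toMeasure) (marg1 μ.toMeasure))
    (hf : Measurable f) (hC : ∀ q, |f q| ≤ C) {c : ℝ}
    (hex : ∀ᵐ ω ∂marg1 μ.toMeasure, ∃ n : ℕ, logMgf f n ω < c * n) :
    ∫ ω, entropicGain f μ.toMeasure ω ∂marg1 μ.toMeasure ≤ c := by
  set κ := toKappa μ.toMeasure
  have hκ := toKappa_nonneg μ.toMeasure
  have hprob : IsProbabilityMeasure (marg1 μ.toMeasure) :=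
    Measure.isProbabilityMeasure_map measurable_fst.aemeasurable
  have hlogi (n : ℕ) : Integrable (logMgf f n) (marg1 μ.toMeasure) :=
    .of_bound (measurable_logMgf hf n).aestronglyMeasurable (n * C)
      (hclu.mono fun ω hω => abs_logMgf_le hC n hω)
  have hstep (n : ℕ) : ∀ᵐ ω ∂marg1 μ.toMeasure, c * (n + 1 : ℕ) - logMgf f (n + 1) ω ≤
      c - entropicGain f μ.toMeasure ω + kernelStep κ (fun ω => c * n - logMgf f n ω) ω := by
    filter_upwards [hclu, ae_sum_toKappa, ae_toKappa_pos_iff hμ] with ω hω hsum hpos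
    have hgibbs := sum_mul_add_logMgf_le hC n hω (hκ ω) hsum fun e => (hpos e).1
    have hkernel : kernelStep κ (fun ω => c * n - logMgf f n ω) ω =
        c * n - ∑ e, κ ω e * logMgf f n (shift e.1 ω) := by
      simp only [kernelStep, mul_sub, Finset.sum_sub_distrib, ← Finset.sum_mul]
      rw [hsum, one_mul]
    simp only [mul_add, Finset.sum_add_distrib] at hgibbs
    rw [hkernel, entropicGain]
    push_cast
    linarith
  have hmax := integral_nonneg_of_ae_exists_pos (h := fun n ω => c * n - logMgf f n ω)
    (φ := fun ω => c - entropicGain f μ.toMeasure ω) (monotone_kernelStep hκ)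
    (kernelStep_zero κ).ge (integral_kernelStep_toKappa hμ.1)
    (fun n => measurable_const.sub (measurable_logMgf hf n))
    (fun n => (integrable_const _).sub (hlogi n)) ((integrable_const c).sub hgain)
    (by funext ω; simp [logMgf_zero]) hstep (by simpa only [sub_pos] using hex)
  rw [integral_sub (integrable_const c) hgain] at hmax
  simpa using hmax

theorem measure_cluZero_inter_linearGrowth_ne_zero {P : Measure (Config d)}
    {μ : ProbabilityMeasure (EnvSp d)} (hμ : μ ∈ M1star d (P[|cluZero d])) (hf : Measurable f)
    (hC : ∀ q, |f q| ≤ C) {c : ℝ}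
    (hc : (c : EReal) < (pairing f μ : ℝ) - ((entI (P[|cluZero d]) μ : ℝ≥0∞) : EReal)) :
    P (cluZero d ∩ linearGrowth f c) ≠ 0 := by
  intro hnull
  have hent : entI (P[|cluZero d]) μ ≠ ∞ := fun h => by simp [h] at hc
  have hclu : ∀ᵐ ω ∂marg1 μ.toMeasure, ω ∈ cluZero d :=
    hμ.2.1.ae_le (ae_cond_mem measurableSet_cluZero)
  have hcond : P[|cluZero d] (linearGrowth f c) = 0 := by
    rw [cond_apply measurableSet_cluZero, hnull, mul_zero]
  have hex : ∀ᵐ ω ∂marg1 μ.toMeasure, ∃ n : ℕ, logMgf f n ω < c * n := by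
    filter_upwards [measure_eq_zero_iff_ae_notMem.1 (hμ.2.1 hcond)] with ω hω
    simp only [linearGrowth, Set.mem_ofPred_eq, not_exists, not_forall, not_le] at hω
    simpa using hω 0
  have hfi : Integrable f μ.toMeasure := .of_bound hf.aestronglyMeasurable C (ae_of_all _ hC)
  obtain ⟨hgain, hgainEq⟩ := integral_entropicGain hμ hclu hent hf hfi
  have hle := le_integral_entropicGain hμ hclu hgain hf hC hex
  rw [hgainEq] at hle
  rw [← EReal.coe_ennreal_toReal hent, ← EReal.coe_sub, EReal.coe_lt_coe_iff] at hc
  exact hc.not_ge hle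

theorem ae_mem_linearGrowth {p : ℝ} {P : Measure (Config d)} (hd : 0 < d) (hp : 0 < p)
    (hP : IsBernoulli d p P) (hf : Measurable f) (hC : ∀ q, |f q| ≤ C) {c : ℝ}
    (hc : (c : EReal) < ⨆ μ ∈ M1star d (P[|cluZero d]),
      (pairing f μ : ℝ) - ((entI (P[|cluZero d]) μ : ℝ≥0∞) : EReal)) :
    ∀ᵐ ω ∂P[|cluZero d], ω ∈ linearGrowth f c := by
  obtain ⟨μ, hμc⟩ := lt_iSup_iff.1 hc
  obtain ⟨hμ, hμc⟩ := lt_iSup_iff.1 hμc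
  have hdiff : P (cluZero d \ linearGrowth f c) = 0 :=
    hP.measure_cluZero_diff_eq_zero hp hd (measurableSet_linearGrowth hf c)
      (fun _ hω _ => mem_linearGrowth_iff_shift hC hω)
      (measure_cluZero_inter_linearGrowth_ne_zero hμ hf hC hμc)
  change P[|cluZero d] (linearGrowth f c)ᶜ = 0
  rw [cond_apply measurableSet_cluZero, ← Set.sdiff_eq, hdiff, mul_zero]

lemma iSup_mem_M1star_eq_iSup (P₀ : Measure (Config d)) (f : EnvSp d → ℝ) :
    ⨆ μ ∈ M1star d P₀, ((pairing f μ : ℝ) : EReal) - ((entI P₀ μ : ℝ≥0∞) : EReal) =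
      ⨆ μ, ((pairing f μ : ℝ) : EReal) - ((entI P₀ μ : ℝ≥0∞) : EReal) := by
  refine le_antisymm (iSup_mono fun μ => iSup_le fun _ => le_rfl) (iSup_le fun μ => ?_)
  by_cases hμ : μ ∈ M1star d P₀
  · exact le_iSup₂_of_le μ hμ le_rfl
  · rw [entI, if_neg fun h => hμ h.1]
    simp

end LowerBound

lemma pc_nonneg (d : ℕ) : 0 ≤ pc d :=
  Real.sInf_nonneg fun _ hq => hq.1.1

end SRWPC

open SRWPC in
theorem log_mgf_lower_bound_general
    (d : ℕ) (hd : 0 < d) (p : ℝ) (hpc : pc d < p)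
    (P : Measure (Config d)) (hP : IsBernoulli d p P)
    (f : EnvSp d → ℝ) (hf : Measurable f) (C : ℝ) (hC : ∀ q, |f q| ≤ C) :
    (∀ᵐ ω ∂(P[|cluZero d]),
      (⨆ μ ∈ M1star d (P[|cluZero d]),
          ((pairing f μ : ℝ) : EReal) - ((entI (P[|cluZero d]) μ : ℝ≥0∞) : EReal)) ≤
        liminf (fun n : ℕ =>
          (((n : ℝ)⁻¹ : EReal) * ENNReal.log (ENNReal.ofReal
            (qE (srw d) ω (fun s : Fin n → Step d =>
              Real.exp (∑ k : Fin n, f (envPair ω s k)))))))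
          atTop) ∧
    (⨆ μ ∈ M1star d (P[|cluZero d]),
        ((pairing f μ : ℝ) : EReal) - ((entI (P[|cluZero d]) μ : ℝ≥0∞) : EReal)) =
      ⨆ μ : ProbabilityMeasure (EnvSp d),
        ((pairing f μ : ℝ) : EReal) - ((entI (P[|cluZero d]) μ : ℝ≥0∞) : EReal) := by
  refine ⟨?_, iSup_mem_M1star_eq_iSup _ _⟩
  have hp : 0 < p := (pc_nonneg d).trans_lt hpc
  have hgrowth : ∀ᵐ ω ∂P[|cluZero d], ∀ c : ℚ,
      ((c : ℝ) : EReal) < (⨆ μ ∈ M1star d (P[|cluZero d]),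
        ((pairing f μ : ℝ) : EReal) - ((entI (P[|cluZero d]) μ : ℝ≥0∞) : EReal)) →
      ω ∈ linearGrowth f c :=
    ae_all_iff.2 fun _ => eventually_imp_distrib_left.2 (ae_mem_linearGrowth hd hp hP hf hC)
  filter_upwards [hgrowth, ae_cond_mem measurableSet_cluZero] with ω hω hclu
  refine le_of_forall_lt fun a ha => ?_
  obtain ⟨c, hac, hc⟩ := EReal.exists_rat_btwn_of_lt ha
  exact hac.trans_le (le_liminf_of_mem_linearGrowth hC hclu (hω c hc))

open SRWPC in
/-- **Lower bound for the logarithmic moment generating functions** (Corollary 3.5). -/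
theorem log_mgf_lower_bound
    (d : ℕ) (hd : 2 ≤ d) (p : ℝ) (hp0 : 0 < p) (hp1 : p < 1) (hpc : pc d < p)
    (P : Measure (Config d)) (hP : IsBernoulli d p P)
    (f : BoundedContinuousFunction (EnvSp d) ℝ) :
    (∀ᵐ ω ∂(P[|cluZero d]),
      (⨆ μ ∈ M1star d (P[|cluZero d]),
          ((pairing (⇑f) μ : ℝ) : EReal) - ((entI (P[|cluZero d]) μ : ℝ≥0∞) : EReal)) ≤
        Filter.liminf (fun n : ℕ =>
          (((n : ℝ)⁻¹ : EReal) * ENNReal.log (ENNReal.ofReal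
            (qE (srw d) ω (fun s : Fin n → Step d =>
              Real.exp (∑ k : Fin n, f (envPair ω s k)))))))
          Filter.atTop) ∧
    (⨆ μ ∈ M1star d (P[|cluZero d]),
        ((pairing (⇑f) μ : ℝ) : EReal) - ((entI (P[|cluZero d]) μ : ℝ≥0∞) : EReal)) =
      ⨆ μ : ProbabilityMeasure (EnvSp d),
        ((pairing (⇑f) μ : ℝ) : EReal) - ((entI (P[|cluZero d]) μ : ℝ≥0∞) : EReal) :=
  log_mgf_lower_bound_general d (by omega) p hpc P hP f f.continuous.measurable ‖f‖
    fun q => f.norm_coe_le_norm q
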